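/- For n = 5909, the least index i with |a(5909,i)| = M_5909 is L(5909) = (5909·5910 - 2·3735)/4 = 8728680. -/

import Mathlib

open Polynomial

/-- `a n i` is the coefficient of `q^i` in `(q;q)_n = ∏_{k=1}^n (1 - q^k)` over `ℤ`. -/
noncomputable def a (n i : ℕ) : ℤ :=
  (∏ k ∈ Finset.Icc 1 n, (1 - (X : Polynomial ℤ) ^ k)).coeff i

/-- `M n` is the maximum of `|a n i|` over `0 ≤ i ≤ n(n+1)/2`. -/
noncomputable def M (n : ℕ) : ℕ :=
  (Finset.range (n * (n + 1) / 2 + 1)).sup fun i => (a n i).natAbs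

/-- `L n` is the least index `i` with `|a n i| = M n`. -/
noncomputable def L (n : ℕ) : ℕ :=
  sInf {i : ℕ | (a n i).natAbs = M n}

/-!
For `n = 5909` the coefficients are Fourier integrals: `π * a n i = ∫ θ in 0..π, P θ * sin (m * θ)`
with `P θ = ∏_{k=1}^n 2 sin (k θ / 2)` and the half-integral frequency `m = n * (n + 1) / 4 - i`.
On `(0, 2π/n)` the product `P` has a single peak, at `x ≈ 8.412e-4`, of height at least `e ^ 1130`.
On `[2π/n, π]` one has `|P| ≤ e ^ 1080`: since `|1 - e ^ (it)| ≤ 2 / (1 + r) * |1 - r e ^ (it)|`,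
`log |P θ|` is at most `∑ k, log |1 - r e ^ (ikθ)|` plus a small error, and the Fourier expansion of
this sum is bounded through the dilogarithm, the critical case being `θ` close to a rational
multiple of `2π` with small denominator. So only the peak matters.

The difference of the integrals at `m + 1/2` and `m - 1/2` is `2 ∫ P θ * sin (θ / 2) * cos (m * θ)`,
whose sign is that of `π / 2 - m * x` up to corrections. These are small because `P` is concentrated
near `x`, and they are bounded by integration by parts against `P' = P * cotSum`, using tangents and
secants of the functions `(c - θ) * cotSum θ`, which are convex for `0 ≤ c ≤ 2π/n`. As
`1867 < π / (2 * x) < 1868`, the integral increases up to `m = 1867.5` and decreases from there to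
`m = 5200.5`. For larger `m` the sine oscillates within the peak, and the integral stays below the
value at `1867.5`, where `sin (m * θ)` is almost `1` throughout the peak. So `|a n i|` is maximal
exactly at `m = ±1867.5`, that is at `i = 8728680` and `i = 8732415`.
-/

namespace SineProduct

open Real Set intervalIntegral

/-! ### The Fourier integral for the coefficients -/

lemma integral_cos_int_mul {k : ℤ} (hk : k ≠ 0) : ∫ θ in (0 : ℝ)..π, cos (k * θ) = 0 := by
  rw [integral_comp_mul_left (fun x => cos x) (Int.cast_ne_zero.2 hk)]
  simp [sin_int_mul_pi]

lemma re_eval₂_mul_exp (p : ℤ[X]) (i : ℕ) (θ : ℝ) :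
    (p.eval₂ (Int.castRingHom ℂ) (Complex.exp (θ * Complex.I)) *
      Complex.exp ((-(i * θ) : ℝ) * Complex.I)).re =
      ∑ j ∈ p.support, (p.coeff j : ℝ) * cos (((j - i : ℤ) : ℝ) * θ) := by
  rw [eval₂_eq_sum, Polynomial.sum, Finset.sum_mul, Complex.re_sum]
  refine Finset.sum_congr rfl fun j _ => ?_
  have hterm : Int.castRingHom ℂ (p.coeff j) * Complex.exp (θ * Complex.I) ^ j *
      Complex.exp ((-(i * θ) : ℝ) * Complex.I) =
      ((p.coeff j : ℝ) : ℂ) * Complex.exp (((((j - i : ℤ) : ℝ) * θ : ℝ) : ℂ) * Complex.I) := by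
    rw [← Complex.exp_nat_mul, mul_assoc, ← Complex.exp_add, eq_intCast, Complex.ofReal_intCast]
    congr 2
    push_cast
    ring
  rw [hterm, Complex.re_ofReal_mul, Complex.exp_ofReal_mul_I_re]

lemma pi_mul_coeff_eq_integral (p : ℤ[X]) (i : ℕ) :
    π * (p.coeff i : ℝ) = ∫ θ in (0 : ℝ)..π,
      (p.eval₂ (Int.castRingHom ℂ) (Complex.exp (θ * Complex.I)) *
        Complex.exp ((-(i * θ) : ℝ) * Complex.I)).re := by
  simp_rw [re_eval₂_mul_exp]
  rw [integral_finsetSum fun j _ => Continuous.intervalIntegrable (by fun_prop) _ _]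
  have hterm (j : ℕ) : ∫ θ in (0 : ℝ)..π, (p.coeff j : ℝ) * cos (((j - i : ℤ) : ℝ) * θ) =
      if j = i then π * (p.coeff i : ℝ) else 0 := by
    rw [intervalIntegral.integral_const_mul]
    split_ifs with h
    · simp [h, mul_comm]
    · rw [integral_cos_int_mul (by omega), mul_zero]
  simp_rw [hterm, Finset.sum_ite_eq', mem_support_iff]
  split_ifs with h
  · rfl
  · simp [not_not.1 h]

/-- The real product `∏_{k=1}^n 2 sin (k θ / 2)`, which is `(q;q)_n` at `q = e^{iθ}` up to a
phase. -/
noncomputable def sinProd (n : ℕ) (θ : ℝ) : ℝ := ∏ k ∈ Finset.Icc 1 n, 2 * sin (k * θ / 2)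

lemma sinProd_succ (n : ℕ) (θ : ℝ) :
    sinProd (n + 1) θ = sinProd n θ * (2 * sin ((n + 1 : ℕ) * θ / 2)) := by
  rw [sinProd, Finset.prod_Icc_succ_top (by omega), sinProd]

lemma continuous_sinProd (n : ℕ) : Continuous (sinProd n) := by
  unfold sinProd; fun_prop

lemma one_sub_exp_mul_I (x : ℝ) :
    1 - Complex.exp (x * Complex.I) =
      -Complex.I * (2 * sin (x / 2) : ℝ) * Complex.exp ((x / 2 : ℝ) * Complex.I) := by
  have hsplit : Complex.exp (x * Complex.I) =
      Complex.exp ((x / 2 : ℝ) * Complex.I) * Complex.exp ((x / 2 : ℝ) * Complex.I) := by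
    rw [← Complex.exp_add]; congr 1; push_cast; ring
  rw [hsplit, Complex.exp_mul_I, ← Complex.ofReal_cos, ← Complex.ofReal_sin]
  have hcos : ((cos (x / 2) : ℝ) : ℂ) ^ 2 = 1 - ((sin (x / 2) : ℝ) : ℂ) ^ 2 := by
    exact_mod_cast cos_sq' (x / 2)
  push_cast at *
  linear_combination (-1) * hcos + (Complex.sin (x / 2)) ^ 2 * Complex.I_sq

lemma prod_one_sub_exp_pow (n : ℕ) (θ : ℝ) :
    ∏ k ∈ Finset.Icc 1 n, (1 - Complex.exp (θ * Complex.I) ^ k) =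
      (-Complex.I) ^ n * (sinProd n θ : ℝ) *
        Complex.exp ((n * (n + 1) / 4 * θ : ℝ) * Complex.I) := by
  induction n with
  | zero => simp [sinProd]
  | succ n ih =>
    have hpow : Complex.exp (θ * Complex.I) ^ (n + 1) =
        Complex.exp ((((n + 1 : ℕ) : ℝ) * θ : ℝ) * Complex.I) := by
      rw [← Complex.exp_nat_mul]; congr 1; push_cast; ring
    have hphase : Complex.exp ((((n + 1 : ℕ) : ℝ) * ((n + 1 : ℕ) + 1) / 4 * θ : ℝ) * Complex.I) =
        Complex.exp ((n * (n + 1) / 4 * θ : ℝ) * Complex.I) *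
          Complex.exp ((((n + 1 : ℕ) : ℝ) * θ / 2 : ℝ) * Complex.I) := by
      rw [← Complex.exp_add]; congr 1; push_cast; ring
    rw [Finset.prod_Icc_succ_top (by omega), ih, hpow, one_sub_exp_mul_I, sinProd_succ, hphase]
    push_cast
    ring

lemma pi_mul_a_eq_integral {n : ℕ} (hn : n % 4 = 1) (i : ℕ) :
    π * (a n i : ℝ) =
      ∫ θ in (0 : ℝ)..π, sinProd n θ * sin (((n * (n + 1) : ℝ) / 4 - i) * θ) := by
  rw [a, pi_mul_coeff_eq_integral]
  refine integral_congr fun θ _ => ?_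
  have hI : (-Complex.I) ^ n = -Complex.I := by
    rw [← Nat.div_add_mod n 4, hn, pow_succ, pow_mul, neg_pow, Complex.I_pow_four]
    norm_num
  simp only [eval₂_finsetProd, eval₂_sub, eval₂_one, eval₂_pow, eval₂_X]
  rw [prod_one_sub_exp_pow, hI, mul_assoc, ← Complex.exp_add, ← add_mul, ← Complex.ofReal_add,
    mul_assoc, neg_mul, Complex.neg_re, Complex.I_mul_re, neg_neg, Complex.im_ofReal_mul,
    Complex.exp_ofReal_mul_I_im]
  congr 2
  ring
/-! ### The imaginary part of the dilogarithm -/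

lemma hasSum_pow_mul_cos_div {r : ℝ} (hr : |r| < 1) (y : ℝ) :
    HasSum (fun m : ℕ => r ^ m * cos (m * y) / m) (-(log (1 + r ^ 2 - 2 * r * cos y) / 2)) := by
  have hnorm : ‖(r : ℂ) * Complex.exp (y * Complex.I)‖ < 1 := by
    rwa [norm_mul, Complex.norm_exp_ofReal_mul_I, mul_one, Complex.norm_real]
  convert Complex.hasSum_re (Complex.hasSum_taylorSeries_neg_log hnorm) using 1
  · funext m
    have harg : (m : ℂ) * (y * Complex.I) = ((m * y : ℝ) : ℂ) * Complex.I := by push_cast; ring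
    rw [mul_pow, ← Complex.exp_nat_mul, harg, ← Complex.ofReal_pow, ← Complex.ofReal_natCast,
      Complex.div_ofReal_re, Complex.re_ofReal_mul, Complex.exp_ofReal_mul_I_re]
  · have hsq : 1 + r ^ 2 - 2 * r * cos y = ‖1 - (r : ℂ) * Complex.exp (y * Complex.I)‖ ^ 2 := by
      rw [← Complex.normSq_eq_norm_sq, Complex.normSq_apply]
      simp only [Complex.sub_re, Complex.one_re, Complex.sub_im, Complex.one_im,
        Complex.re_ofReal_mul, Complex.im_ofReal_mul, Complex.exp_ofReal_mul_I_re,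
        Complex.exp_ofReal_mul_I_im]
      linear_combination (-r ^ 2) * sin_sq_add_cos_sq y
    rw [Complex.neg_re, Complex.log_re, hsq, Real.log_pow]
    push_cast
    ring

lemma one_add_sq_sub_cos_pos {r : ℝ} (h0 : 0 ≤ r) (h1 : r < 1) (w : ℝ) :
    0 < 1 + r ^ 2 - 2 * r * cos w := by
  nlinarith [cos_le_one w]

/-- The dilogarithm `Li₂ r` on `[0, 1]`. -/
noncomputable def dilog (r : ℝ) : ℝ := ∑' m : ℕ, r ^ m / (m : ℝ) ^ 2

/-- The imaginary part of the dilogarithm `Li₂ (r e^{iw})`; its derivative in `w` is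
`-log |1 - r e^{iw}|`. -/
noncomputable def imDilog (r w : ℝ) : ℝ := ∑' m : ℕ, r ^ m * sin (m * w) / (m : ℝ) ^ 2

section

variable {r : ℝ}

lemma summable_pow_div_natCast_pow (h0 : 0 ≤ r) (h1 : r < 1) (k : ℕ) :
    Summable fun m : ℕ => r ^ m / (m : ℝ) ^ k := by
  have hgeom := summable_geometric_of_lt_one h0 h1
  refine (summable_nat_add_iff 1).1 (Summable.of_nonneg_of_le (fun m => by positivity)
    (fun m => ?_) ((summable_nat_add_iff 1).2 hgeom))
  exact div_le_self (by positivity) (one_le_pow₀ (by simp))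

lemma norm_pow_mul_sin_div_sq_le (h0 : 0 ≤ r) (w : ℝ) (m : ℕ) :
    ‖r ^ m * sin (m * w) / (m : ℝ) ^ 2‖ ≤ r ^ m / (m : ℝ) ^ 2 := by
  rw [norm_div, norm_mul, norm_pow, norm_pow, Real.norm_natCast, norm_of_nonneg h0]
  gcongr
  exact mul_le_of_le_one_right (by positivity) (abs_sin_le_one _)

lemma norm_pow_mul_cos_div_le (h0 : 0 ≤ r) (w : ℝ) (m : ℕ) :
    ‖r ^ m * cos (m * w) / (m : ℝ)‖ ≤ r ^ m := by
  rcases m.eq_zero_or_pos with rfl | hm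
  · simp
  · rw [norm_div, norm_mul, norm_pow, Real.norm_natCast, norm_of_nonneg h0]
    exact (div_le_self (by positivity) (by exact_mod_cast hm)).trans
      (mul_le_of_le_one_right (by positivity) (abs_cos_le_one _))

lemma summable_imDilog (h0 : 0 ≤ r) (h1 : r < 1) (w : ℝ) :
    Summable fun m : ℕ => r ^ m * sin (m * w) / (m : ℝ) ^ 2 :=
  .of_norm_bounded (summable_pow_div_natCast_pow h0 h1 2) (norm_pow_mul_sin_div_sq_le h0 w)

lemma hasDerivAt_imDilog (h0 : 0 ≤ r) (h1 : r < 1) (w : ℝ) :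
    HasDerivAt (imDilog r) (-(log (1 + r ^ 2 - 2 * r * cos w) / 2)) w := by
  rw [← (hasSum_pow_mul_cos_div (abs_lt.2 ⟨by linarith, h1⟩) w).tsum_eq]
  refine hasDerivAt_tsum (summable_geometric_of_lt_one h0 h1)
    (g := fun (m : ℕ) w => r ^ m * sin (m * w) / (m : ℝ) ^ 2) (fun m y => ?_)
    (fun m y => norm_pow_mul_cos_div_le h0 y m) (y₀ := 0) (summable_imDilog h0 h1 0) w
  rcases m.eq_zero_or_pos with rfl | hm
  · simpa using hasDerivAt_const y (0 : ℝ)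
  · refine ((((hasDerivAt_id y).const_mul (m : ℝ)).sin.const_mul (r ^ m)).div_const
      ((m : ℝ) ^ 2)).congr_deriv ?_
    simp only [id]
    field_simp

lemma abs_imDilog_le (h0 : 0 ≤ r) (h1 : r < 1) (w : ℝ) : |imDilog r w| ≤ dilog r :=
  tsum_of_norm_bounded (summable_pow_div_natCast_pow h0 h1 2).hasSum
    (norm_pow_mul_sin_div_sq_le h0 w)

lemma imDilog_zero : imDilog r 0 = 0 := by simp [imDilog]

lemma imDilog_pi : imDilog r π = 0 := by simp [imDilog, sin_nat_mul_pi]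

lemma imDilog_periodic : Function.Periodic (imDilog r) (2 * π) := by
  intro w
  unfold imDilog
  congr 1 with m
  rw [mul_add, sin_add_nat_mul_two_pi]

lemma concaveOn_imDilog (h0 : 0 ≤ r) (h1 : r < 1) : ConcaveOn ℝ (Icc 0 π) (imDilog r) := by
  have hd := hasDerivAt_imDilog h0 h1
  refine AntitoneOn.concaveOn_of_deriv (convex_Icc 0 π)
    (fun x _ => (hd x).continuousAt.continuousWithinAt)
    (fun x _ => (hd x).differentiableAt.differentiableWithinAt) fun x hx y hy hxy => ?_
  rw [interior_Icc] at hx hy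
  rw [(hd x).deriv, (hd y).deriv]
  have hcos : cos y ≤ cos x := cos_le_cos_of_nonneg_of_le_pi hx.1.le hy.2.le hxy
  have hlog := log_le_log (one_add_sq_sub_cos_pos h0 h1 x)
    (show 1 + r ^ 2 - 2 * r * cos x ≤ 1 + r ^ 2 - 2 * r * cos y by nlinarith)
  linarith

lemma imDilog_nonneg (h0 : 0 ≤ r) (h1 : r < 1) {w : ℝ} (hw : w ∈ Icc 0 π) : 0 ≤ imDilog r w := by
  have hmin := (concaveOn_imDilog h0 h1).min_le_of_mem_Icc (left_mem_Icc.2 pi_nonneg)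
    (right_mem_Icc.2 pi_nonneg) hw
  rwa [imDilog_zero, imDilog_pi, min_self] at hmin

lemma neg_log_mul_le_imDilog (h0 : 0 ≤ r) (h1 : r < 1) {w : ℝ} (hw : π ≤ w) :
    -(log (1 + r) * (w - π)) ≤ imDilog r w := by
  have hd := hasDerivAt_imDilog h0 h1
  have hderiv (x : ℝ) : -log (1 + r) ≤ deriv (imDilog r) x := by
    rw [(hd x).deriv]
    have hlog := log_le_log (one_add_sq_sub_cos_pos h0 h1 x)
      (show 1 + r ^ 2 - 2 * r * cos x ≤ (1 + r) ^ 2 by nlinarith [neg_one_le_cos x])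
    rw [log_pow] at hlog
    push_cast at hlog
    linarith
  have hmvt := mul_sub_le_image_sub_of_le_deriv (fun x => (hd x).differentiableAt) hderiv hw
  rw [imDilog_pi] at hmvt
  linarith

end

lemma dilog_nine_tenths_le : dilog (9 / 10) ≤ 131 / 100 := by
  have hs := summable_pow_div_natCast_pow (r := 9 / 10) (by norm_num) (by norm_num) 2
  have hgeom := (hasSum_geometric_of_lt_one (r := (9 / 10 : ℝ)) (by norm_num)
    (by norm_num)).mul_left ((9 / 10 : ℝ) ^ 20 / 400)
  have htail : ∑' m : ℕ, (9 / 10 : ℝ) ^ (m + 20) / ((m + 20 : ℕ) : ℝ) ^ 2 ≤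
      (9 / 10) ^ 20 / 400 * 10 := by
    refine (((summable_nat_add_iff 20).2 hs).tsum_le_tsum (fun m => ?_) hgeom.summable).trans ?_
    · have hsq : (400 : ℝ) ≤ ((m + 20 : ℕ) : ℝ) ^ 2 := by
        push_cast; nlinarith [Nat.cast_nonneg (α := ℝ) m]
      rw [div_mul_eq_mul_div, ← pow_add, add_comm 20 m]
      gcongr
    · rw [hgeom.tsum_eq]; norm_num
  have hhead : ∑ m ∈ Finset.range 20, (9 / 10 : ℝ) ^ m / (m : ℝ) ^ 2 ≤ 1.302 := by
    norm_num [Finset.sum_range_succ]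
  rw [dilog, ← hs.sum_add_tsum_nat_add 20]
  norm_num at hhead htail ⊢
  linarith

/-- Because `Li₂` is a power series with nonnegative coefficients and no constant term. -/
lemma dilog_le_mul_dilog {r s : ℝ} (h0 : 0 ≤ r) (hrs : r ≤ s) (hs : 0 < s) (h1 : s < 1) :
    dilog r ≤ r / s * dilog s := by
  rw [dilog, dilog, ← tsum_mul_left]
  refine (summable_pow_div_natCast_pow h0 (hrs.trans_lt h1) 2).tsum_le_tsum (fun m => ?_)
    ((summable_pow_div_natCast_pow hs.le h1 2).mul_left _)
  rcases m with _ | m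
  · simp
  · rw [← mul_div_assoc, pow_succ' r, pow_succ' s, div_mul_eq_mul_div, mul_left_comm,
      mul_div_cancel_left₀ _ hs.ne']
    gcongr

lemma log_nineteen_tenths_le : log (1 + 9 / 10) ≤ 0.6432 := by
  rw [show (1 + 9 / 10 : ℝ) = 2 * 0.95 by norm_num, log_mul (by norm_num) (by norm_num)]
  linarith [log_le_sub_one_of_pos (show (0 : ℝ) < 0.95 by norm_num), log_two_lt_d9]

lemma log_one_add_le {r : ℝ} (h0 : 0 ≤ r) (hr : r ≤ 81 / 100) : log (1 + r) ≤ 0.5982 := by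
  refine (log_le_log (by linarith) (show 1 + r ≤ 2 * 0.905 by linarith)).trans ?_
  rw [log_mul (by norm_num) (by norm_num)]
  linarith [log_le_sub_one_of_pos (show (0 : ℝ) < 0.905 by norm_num), log_two_lt_d9]

lemma neg_imDilog_nine_tenths_le {w : ℝ} (hw : 2 * π ≤ w) : -imDilog (9 / 10) w ≤ 0.116 * w := by
  have hpi := pi_gt_d2
  have hper : imDilog (9 / 10) (w - 2 * π) = imDilog (9 / 10) w := imDilog_periodic.sub_eq w
  rcases le_total (w - 2 * π) π with h | h
  · have := imDilog_nonneg (r := 9 / 10) (by norm_num) (by norm_num) ⟨by linarith, h⟩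
    nlinarith
  · have hlow := neg_log_mul_le_imDilog (r := 9 / 10) (by norm_num) (by norm_num) h
    have habs := (abs_le.1 (abs_imDilog_le (r := 9 / 10) (by norm_num) (by norm_num) w)).1
    have hlog := mul_le_mul_of_nonneg_right log_nineteen_tenths_le (sub_nonneg.2 h)
    rw [hper] at hlow
    nlinarith [dilog_nine_tenths_le]

lemma neg_imDilog_le {r : ℝ} (h0 : 0 ≤ r) (hr : r ≤ 81 / 100) {w : ℝ} (hw : 0 ≤ w) :
    -imDilog r w ≤ 0.232 * w := by
  have hpi := pi_gt_d2
  rcases le_total w π with h | h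
  · have := imDilog_nonneg h0 (by linarith) ⟨hw, h⟩
    nlinarith
  · have hlow := neg_log_mul_le_imDilog h0 (by linarith) h
    have habs := (abs_le.1 (abs_imDilog_le h0 (by linarith) w)).1
    have hdilog := dilog_le_mul_dilog (s := 9 / 10) h0 (by linarith) (by norm_num) (by norm_num)
    have hlog := mul_le_mul_of_nonneg_right (log_one_add_le h0 hr) (sub_nonneg.2 h)
    nlinarith [dilog_nine_tenths_le]

/-! ### The product away from its main peak -/

lemma two_mul_abs_sub_round_le_abs_sin (x : ℝ) : 2 * |x - round x| ≤ |sin (π * x)| := by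
  have hshift : π * x = π * (x - round x) + round x * π := by ring
  have habs : |π * (x - round x)| = π * |x - round x| := by rw [abs_mul, abs_of_pos pi_pos]
  have hle : |π * (x - round x)| ≤ π / 2 := by
    rw [habs]; nlinarith [abs_sub_round x, pi_pos]
  have hjordan := mul_abs_le_abs_sin hle
  rw [habs, ← mul_assoc, div_mul_cancel₀ _ pi_ne_zero] at hjordan
  rwa [hshift, sin_add_int_mul_pi, abs_mul, abs_zpow, abs_neg, abs_one, one_zpow, one_mul]

lemma two_div_le_abs_sin_pi_mul_div {q : ℕ} (hq : 0 < q) {b : ℤ} (hb : ¬ (q : ℤ) ∣ b) :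
    2 / (q : ℝ) ≤ |sin (π * (b / q))| := by
  have hq' : (0 : ℝ) < q := by exact_mod_cast hq
  refine le_trans ?_ (two_mul_abs_sub_round_le_abs_sin (b / q))
  set k := round ((b : ℝ) / q)
  have hne : b - q * k ≠ 0 := fun h => hb ⟨k, by linarith⟩
  have hone : (1 : ℝ) ≤ |(b : ℝ) - q * k| := by exact_mod_cast Int.one_le_abs hne
  rw [show (b : ℝ) / q - k = (b - q * k) / q by field_simp, abs_div, abs_of_pos hq',
    ← mul_div_assoc]
  gcongr
  linarith

/-- The Dirichlet-type sum `∑_{k=1}^n cos (k y)`. -/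
noncomputable def cosSum (n : ℕ) (y : ℝ) : ℝ := ∑ k ∈ Finset.Icc 1 n, cos (k * y)

lemma two_mul_sin_mul_cosSum (n : ℕ) (y : ℝ) :
    2 * sin (y / 2) * cosSum n y = sin ((n + 1 / 2) * y) - sin (y / 2) := by
  induction n with
  | zero => simp [cosSum, show (2⁻¹ : ℝ) * y = y / 2 by ring]
  | succ n ih =>
    have hplus : ((n + 1 : ℕ) + 1 / 2 : ℝ) * y = (n + 1) * y + y / 2 := by push_cast; ring
    have hminus : ((n : ℝ) + 1 / 2) * y = (n + 1) * y - y / 2 := by ring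
    rw [hminus, sin_sub] at ih
    rw [cosSum, Finset.sum_Icc_succ_top (by omega), ← cosSum, mul_add, ih, hplus, sin_add]
    push_cast
    ring

lemma abs_cosSum_le (n : ℕ) (y : ℝ) : |cosSum n y| ≤ n := by
  refine (Finset.abs_sum_le_sum_abs _ _).trans
    ((Finset.sum_le_sum fun k _ => abs_cos_le_one _).trans ?_)
  simp

lemma cosSum_add_int_mul_two_pi (n : ℕ) (y : ℝ) (p : ℤ) :
    cosSum n (y + p * (2 * π)) = cosSum n y := by
  refine Finset.sum_congr rfl fun k _ => ?_
  rw [← cos_add_int_mul_two_pi (k * y) (k * p)]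
  congr 1
  push_cast
  ring

lemma abs_cosSum_le_of_le_abs_sin (n : ℕ) {y d : ℝ} (hd : 0 < d) (h : d ≤ |sin (y / 2)|) :
    |cosSum n y| ≤ 1 / (2 * d) + 1 / 2 := by
  have hs : 0 < |sin (y / 2)| := hd.trans_le h
  have hmul : |cosSum n y| * (2 * |sin (y / 2)|) ≤ 1 + |sin (y / 2)| := by
    have habs := abs_sub (sin ((n + 1 / 2) * y)) (sin (y / 2))
    rw [← two_mul_sin_mul_cosSum, abs_mul, abs_mul, abs_two] at habs
    linarith [abs_sin_le_one ((n + 1 / 2) * y)]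
  calc |cosSum n y| ≤ (1 + |sin (y / 2)|) / (2 * |sin (y / 2)|) :=
        (le_div_iff₀ (by positivity)).2 hmul
    _ = 1 / (2 * |sin (y / 2)|) + 1 / 2 := by field_simp
    _ ≤ 1 / (2 * d) + 1 / 2 := by gcongr

/-- At `y = 0` the quotient is `0`, and the bound is trivial. -/
lemma neg_cosSum_le (n : ℕ) {y : ℝ} (hy : |y| ≤ 13 / 10) :
    -cosSum n y ≤ -(sin ((n + 1 / 2) * y) / y) + 1 := by
  wlog hpos : 0 < y generalizing y
  · rcases (not_lt.1 hpos).eq_or_lt with rfl | hneg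
    · simp only [div_zero, neg_zero, zero_add]
      linarith [(abs_le.1 (abs_cosSum_le n 0)).1, show cosSum n 0 = n by simp [cosSum]]
    · simpa [cosSum, neg_div_neg_eq] using this (y := -y) (by rwa [abs_neg]) (by linarith)
  rw [abs_of_pos hpos] at hy
  have hformula := two_mul_sin_mul_cosSum n y
  have hcube := sin_gt_sub_cube (x := y / 2) (by linarith)
  have hlt := sin_lt (x := y / 2) (by linarith)
  have hW := (abs_le.1 (abs_sin_le_one ((n + 1 / 2) * y))).1
  set s := sin (y / 2)
  set W := sin ((n + 1 / 2) * y)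
  have hs : 0 < s := by nlinarith [sq_nonneg y]
  have hsplit : -cosSum n y = -(W / y) + 1 / 2 - W * (1 / (2 * s) - 1 / y) := by
    rw [show cosSum n y = (W - s) / (2 * s) by rw [eq_div_iff (by positivity)]; linarith]
    field_simp
    ring
  have hnonneg : 0 ≤ 1 / (2 * s) - 1 / y :=
    sub_nonneg.2 (one_div_le_one_div_of_le (by linarith) (by linarith))
  have hhalf : 1 / (2 * s) - 1 / y ≤ 1 / 2 := by
    rw [div_sub_div _ _ (by positivity) (by positivity),
      div_le_div_iff₀ (by positivity) (by positivity)]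
    nlinarith [mul_pos hpos hpos, pow_pos hpos 3]
  rw [hsplit]
  nlinarith

lemma tsum_nine_tenths_pow_div_mul_le {g : ℕ → ℝ} {C D : ℝ}
    (hg : Summable fun m : ℕ => (9 / 10 : ℝ) ^ m / m * g m) (hC : 0 ≤ C) (hD : 0 ≤ D)
    (hhead : ∀ m, 1 ≤ m → m ≤ 40 → g m ≤ C) (htail : ∀ m, 41 ≤ m → g m ≤ D) :
    ∑' m : ℕ, (9 / 10 : ℝ) ^ m / m * g m ≤ C * 2.31 + D * 0.00325 := by
  have hgeom := (hasSum_geometric_of_lt_one (r := (9 / 10 : ℝ)) (by norm_num)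
    (by norm_num)).mul_left (D * ((9 / 10 : ℝ) ^ 41 / 41))
  have hfirst : ∑ m ∈ Finset.range 41, (9 / 10 : ℝ) ^ m / m * g m ≤ C * 2.31 := by
    calc ∑ m ∈ Finset.range 41, (9 / 10 : ℝ) ^ m / m * g m
        ≤ ∑ m ∈ Finset.range 41, (9 / 10 : ℝ) ^ m / m * C := by
          refine Finset.sum_le_sum fun m hm => ?_
          rcases m.eq_zero_or_pos with rfl | hpos
          · simp
          · have := hhead m hpos (by simpa [Nat.lt_succ_iff] using hm)
            gcongr
      _ = C * ∑ m ∈ Finset.range 41, (9 / 10 : ℝ) ^ m / m := by rw [← Finset.sum_mul, mul_comm]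
      _ ≤ C * 2.31 := by gcongr; norm_num [Finset.sum_range_succ]
  have hrest : ∑' m : ℕ, (9 / 10 : ℝ) ^ (m + 41) / (m + 41 : ℕ) * g (m + 41) ≤ D * 0.00325 := by
    refine (((summable_nat_add_iff 41).2 hg).tsum_le_tsum (fun m => ?_) hgeom.summable).trans ?_
    · have hD' := htail (m + 41) (by omega)
      calc (9 / 10 : ℝ) ^ (m + 41) / (m + 41 : ℕ) * g (m + 41)
          ≤ (9 / 10 : ℝ) ^ (m + 41) / (m + 41 : ℕ) * D := by gcongr
        _ ≤ (9 / 10 : ℝ) ^ (m + 41) / 41 * D := by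
            gcongr
            push_cast
            linarith [m.cast_nonneg (α := ℝ)]
        _ = D * ((9 / 10 : ℝ) ^ 41 / 41) * (9 / 10) ^ m := by ring
    · rw [hgeom.tsum_eq, mul_assoc]
      gcongr
      norm_num
  rw [← hg.sum_add_tsum_nat_add 41]
  exact add_le_add hfirst hrest

/-- The sum `∑_{k=1}^n log |1 - r e^{ikθ}|`, a smoothing of `log |sinProd n θ|` (the case
`r = 1`). -/
noncomputable def smoothLog (r : ℝ) (n : ℕ) (θ : ℝ) : ℝ :=
  ∑ k ∈ Finset.Icc 1 n, log (1 + r ^ 2 - 2 * r * cos (k * θ)) / 2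

lemma hasSum_smoothLog {r : ℝ} (hr : |r| < 1) (n : ℕ) (θ : ℝ) :
    HasSum (fun m : ℕ => r ^ m / m * -cosSum n (m * θ)) (smoothLog r n θ) := by
  have hlog : smoothLog r n θ =
      -∑ k ∈ Finset.Icc 1 n, -(log (1 + r ^ 2 - 2 * r * cos (k * θ)) / 2) := by
    rw [smoothLog, Finset.sum_neg_distrib, neg_neg]
  rw [hlog]
  refine (hasSum_sum (s := Finset.Icc 1 n)
    fun k _ => hasSum_pow_mul_cos_div hr (k * θ)).neg.congr_fun fun m => ?_
  rw [cosSum, mul_neg, Finset.mul_sum, neg_inj]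
  refine Finset.sum_congr rfl fun k _ => ?_
  rw [show (m : ℝ) * (k * θ) = k * (m * θ) by ring]
  ring

lemma abs_sinProd_le_smoothLog {r : ℝ} (h0 : 0 ≤ r) (h1 : r < 1) (n : ℕ) (θ : ℝ) :
    |sinProd n θ| ≤ (2 / (1 + r)) ^ n * exp (smoothLog r n θ) := by
  have hpow : (2 / (1 + r)) ^ n = ∏ _k ∈ Finset.Icc 1 n, 2 / (1 + r) := by
    rw [Finset.prod_const, Nat.card_Icc, Nat.add_sub_cancel]
  rw [sinProd, smoothLog, Finset.abs_prod, exp_sum, hpow, ← Finset.prod_mul_distrib]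
  refine Finset.prod_le_prod (fun k _ => abs_nonneg _) fun k _ => ?_
  refine abs_le_of_sq_le_sq ?_ (by positivity)
  have hsin : (2 * sin (k * θ / 2)) ^ 2 = 2 - 2 * cos (k * θ) := by
    rw [mul_pow, sin_sq_eq_half_sub, show 2 * ((k : ℝ) * θ / 2) = k * θ by ring]
    ring
  have hexp : exp (log (1 + r ^ 2 - 2 * r * cos (k * θ)) / 2) ^ 2 =
      1 + r ^ 2 - 2 * r * cos (k * θ) := by
    rw [← exp_nat_mul, Nat.cast_two, mul_div_cancel₀ _ two_ne_zero,
      exp_log (one_add_sq_sub_cos_pos h0 h1 _)]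
  rw [hsin, mul_pow, hexp, div_pow, div_mul_eq_mul_div, le_div_iff₀ (by positivity)]
  nlinarith [mul_nonneg (sq_nonneg (1 - r)) (neg_le_iff_add_nonneg'.1 (neg_one_le_cos (k * θ)))]

lemma smoothLog_le_of_far (n : ℕ) {θ : ℝ}
    (h : ∀ m : ℕ, 1 ≤ m → m ≤ 40 → 0.01 ≤ |sin (m * θ / 2)|) :
    smoothLog (9 / 10) n θ ≤ 50.5 * 2.31 + n * 0.00325 := by
  have hsum := hasSum_smoothLog (r := 9 / 10) (by norm_num [abs_of_pos]) n θ
  rw [← hsum.tsum_eq]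
  refine tsum_nine_tenths_pow_div_mul_le hsum.summable (by norm_num) (by positivity)
    (fun m h1 h40 => ?_) fun m _ => (neg_le_abs _).trans (abs_cosSum_le n _)
  refine (neg_le_abs _).trans
    ((abs_cosSum_le_of_le_abs_sin n (d := 0.01) (by norm_num) (h m h1 h40)).trans ?_)
  norm_num

/-- The main part of `cosSum n (m * θ)` when `θ` is `δ` away from a rational multiple of `2π` with
denominator `q`: it is present only for the multiples `m` of `q`. -/
noncomputable def resonance (n q : ℕ) (δ : ℝ) (m : ℕ) : ℝ :=
  if q ∣ m then sin ((n + 1 / 2) * (m * δ)) / (m * δ) else 0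

lemma hasSum_resonance {r : ℝ} (h0 : 0 ≤ r) (h1 : r < 1) (n : ℕ) {q : ℕ} (hq : 0 < q) (δ : ℝ) :
    HasSum (fun m : ℕ => r ^ m / m * resonance n q δ m)
      (imDilog (r ^ q) ((n + 1 / 2) * (q * δ)) / (q * (q * δ))) := by
  have hinj : Function.Injective fun j : ℕ => q * j := fun _ _ => Nat.eq_of_mul_eq_mul_left hq
  rw [← hinj.hasSum_iff]
  · refine ((summable_imDilog (pow_nonneg h0 q) (pow_lt_one₀ h0 h1 hq.ne')
      ((n + 1 / 2) * (q * δ))).hasSum.div_const (q * (q * δ))).congr_fun fun j => ?_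
    simp only [Function.comp, resonance, dvd_mul_right, if_true]
    rw [← pow_mul, show (n + 1 / 2 : ℝ) * ((q * j : ℕ) * δ) = j * ((n + 1 / 2) * (q * δ)) by
      push_cast; ring]
    push_cast
    rw [div_mul_div_comm, div_div]
    congr 1
    ring
  · intro m hm
    have hdvd : ¬ q ∣ m := fun ⟨j, hj⟩ => hm ⟨j, hj.symm⟩
    simp [resonance, hdvd]

lemma resonance_le (n q : ℕ) (δ : ℝ) (m : ℕ) : resonance n q δ m ≤ n + 1 / 2 := by
  unfold resonance
  split_ifs
  · refine (le_abs_self _).trans ?_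
    rw [abs_div]
    refine div_le_of_le_mul₀ (abs_nonneg _) (by positivity) ((abs_sin_le_abs).trans_eq ?_)
    rw [abs_mul, abs_of_nonneg (by positivity : (0 : ℝ) ≤ n + 1 / 2)]
  · positivity

section

variable {n q : ℕ} {p : ℤ} {θ δ : ℝ}

lemma le_abs_sin_of_not_dvd (hq : 0 < q) (hq40 : q ≤ 40) (hpq : IsCoprime (q : ℤ) p)
    (hθ : θ = 2 * π * p / q + δ) (hδ : q * |δ| ≤ 0.0316) {m : ℕ} (hm : m ≤ 40) (hqm : ¬ q ∣ m) :
    0.0342 ≤ |sin (m * θ / 2)| := by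
  have hq' : (0 : ℝ) < q := by exact_mod_cast hq
  have hq40' : (q : ℝ) ≤ 40 := by exact_mod_cast hq40
  have hm40 : (m : ℝ) ≤ 40 := by exact_mod_cast hm
  have hdvd : ¬ (q : ℤ) ∣ m * p := fun h => hqm (by exact_mod_cast hpq.dvd_of_dvd_mul_right h)
  have hrat := two_div_le_abs_sin_pi_mul_div hq hdvd
  have hshift : (m : ℝ) * θ / 2 = π * ((m * p : ℤ) / q) + m * δ / 2 := by
    rw [hθ]; push_cast; field_simp
  have hlip := abs_sub_abs_le_abs_sub (sin (π * ((m * p : ℤ) / q))) (sin (m * θ / 2))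
  have hsub := abs_sin_sub_sin_le (π * ((m * p : ℤ) / q)) (m * θ / 2)
  rw [hshift, sub_add_cancel_left, abs_neg, ← hshift, abs_div, abs_mul, Nat.abs_cast,
    abs_two] at hsub
  have hsmall : m * |δ| / 2 ≤ 0.632 / q := by
    rw [le_div_iff₀ hq']; nlinarith [abs_nonneg δ, mul_nonneg hq'.le (abs_nonneg δ)]
  have hgap : (0.0342 : ℝ) ≤ 2 / q - 0.632 / q := by
    rw [← sub_div, le_div_iff₀ hq']; linarith
  linarith

lemma resonance_sub_cosSum_le (hq : 0 < q) (hq40 : q ≤ 40) (hpq : IsCoprime (q : ℤ) p)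
    (hθ : θ = 2 * π * p / q + δ) (hδ : q * |δ| ≤ 0.0316) {m : ℕ} (hm : m ≤ 40) :
    -cosSum n (m * θ) + resonance n q δ m ≤ 16 := by
  by_cases hqm : q ∣ m
  · have hcos : cosSum n (m * θ) = cosSum n (m * δ) := by
      obtain ⟨j, rfl⟩ := hqm
      rw [← cosSum_add_int_mul_two_pi n ((q * j : ℕ) * δ) (j * p), hθ]
      congr 1
      push_cast
      field_simp
      ring
    have hsmall : |(m : ℝ) * δ| ≤ 13 / 10 := by
      have hm40 : (m : ℝ) ≤ 40 := by exact_mod_cast hm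
      have hq1 : (1 : ℝ) ≤ q := by exact_mod_cast hq
      rw [abs_mul, Nat.abs_cast]
      nlinarith [abs_nonneg δ]
    rw [hcos, resonance, if_pos hqm]
    linarith [neg_cosSum_le n hsmall]
  · have hsin := le_abs_sin_of_not_dvd hq hq40 hpq hθ hδ hm hqm
    have hsum := abs_cosSum_le_of_le_abs_sin n (by norm_num) hsin
    norm_num at hsum
    rw [resonance, if_neg hqm]
    linarith [(abs_le.1 hsum).1]

lemma smoothLog_le_of_near (hq : 0 < q) (hq40 : q ≤ 40) (hpq : IsCoprime (q : ℤ) p)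
    (hθ : θ = 2 * π * p / q + δ) (hδ : q * |δ| ≤ 0.0316)
    (hdilog : -imDilog ((9 / 10) ^ q) ((n + 1 / 2) * (q * |δ|)) ≤
      0.116 * q * ((n + 1 / 2) * (q * |δ|))) :
    smoothLog (9 / 10) n θ ≤ 0.116 * (n + 1 / 2) + 16 * 2.31 + (2 * n + 1) * 0.00325 := by
  have hlog := hasSum_smoothLog (r := 9 / 10) (by norm_num [abs_of_pos]) n θ
  have hres := hasSum_resonance (r := 9 / 10) (by norm_num) (by norm_num) n hq |δ|
  have hmain : -(imDilog ((9 / 10) ^ q) ((n + 1 / 2) * (q * |δ|)) / (q * (q * |δ|))) ≤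
      0.116 * (n + 1 / 2) := by
    rw [← neg_div]
    exact div_le_of_le_mul₀ (by positivity) (by positivity) (hdilog.trans_eq (by ring))
  have hadd := hlog.add hres
  simp_rw [← mul_add] at hadd
  have heven (m : ℕ) : resonance n q |δ| m = resonance n q δ m := by
    rcases abs_choice δ with h | h <;> simp [resonance, h, neg_div_neg_eq]
  have hrest := tsum_nine_tenths_pow_div_mul_le (C := 16) (D := 2 * n + 1) hadd.summable
    (by norm_num) (by positivity)
    (fun m _ hm => by rw [heven]; exact resonance_sub_cosSum_le hq hq40 hpq hθ hδ hm)
    (fun m _ => by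
      linarith [(abs_le.1 (abs_cosSum_le n (m * θ))).1, resonance_le n q |δ| m])
  rw [hadd.tsum_eq] at hrest
  linarith

end

lemma exists_coprime_approx {θ : ℝ} {m : ℕ} (hm : 0 < m) (h : |sin (m * θ / 2)| < 0.01) :
    ∃ (q : ℕ) (p : ℤ) (δ : ℝ), 0 < q ∧ q ≤ m ∧ IsCoprime (q : ℤ) p ∧
      θ = 2 * π * p / q + δ ∧ q * |δ| ≤ 0.0316 := by
  have hm' : (0 : ℝ) < m := by exact_mod_cast hm
  set x : ℚ := round (m * θ / (2 * π)) / (m : ℚ) with hx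
  have hden : x.den ≤ m := by
    have hdvd : (x.den : ℤ) ∣ m := by
      rw [hx]; exact_mod_cast Rat.den_dvd (round (m * θ / (2 * π))) m
    exact Nat.le_of_dvd hm (by exact_mod_cast hdvd)
  have hden' : (x.den : ℝ) ≤ m := by exact_mod_cast hden
  have hxreal : (x.num : ℝ) / x.den = round (m * θ / (2 * π)) / m := by
    rw [← Rat.cast_def, hx]; push_cast; rfl
  refine ⟨x.den, x.num, θ - 2 * π * (x.num / x.den), x.den_pos, hden, ?_, by ring, ?_⟩
  · rw [Int.isCoprime_iff_gcd_eq_one, Int.gcd_comm]; exact x.reduced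
  · have hround := two_mul_abs_sub_round_le_abs_sin (m * θ / (2 * π))
    rw [show π * (m * θ / (2 * π)) = m * θ / 2 by field_simp] at hround
    have hscale : m * |θ - 2 * π * (x.num / x.den)| =
        2 * π * |m * θ / (2 * π) - round (m * θ / (2 * π))| := by
      rw [hxreal, ← abs_of_pos hm', ← abs_mul, abs_of_pos hm', ← abs_of_pos two_pi_pos, ← abs_mul,
        abs_of_pos two_pi_pos]
      congr 1
      field_simp
    calc x.den * |θ - 2 * π * (x.num / x.den)| ≤ m * |θ - 2 * π * (x.num / x.den)| := by gcongr
      _ ≤ 0.0316 := by rw [hscale]; nlinarith [pi_lt_d2, pi_pos]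

lemma two_pi_le_abs_mul {n : ℕ} (hn : 2 ≤ n) {θ δ : ℝ} (hθ : θ ∈ Icc (2 * π / n) π) {p : ℤ}
    (h : θ = 2 * π * p + δ) : 2 * π ≤ n * |δ| := by
  have hn' : (2 : ℝ) ≤ n := by exact_mod_cast hn
  have hθn : 2 * π ≤ n * θ := by have := (div_le_iff₀' (by linarith)).1 hθ.1; linarith
  rcases le_or_gt p 0 with hp | hp
  · have hp' : (p : ℝ) ≤ 0 := by exact_mod_cast hp
    have hδ : θ ≤ |δ| := le_trans (by nlinarith [pi_pos]) (le_abs_self δ)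
    nlinarith
  · have hp' : (1 : ℝ) ≤ p := by exact_mod_cast hp
    have hδ : π ≤ |δ| := le_trans (by nlinarith [pi_pos, hθ.2]) (neg_le_abs δ)
    nlinarith [pi_pos]

lemma smoothLog_le {n : ℕ} (hn : 1000 ≤ n) {θ : ℝ} (hθ : θ ∈ Icc (2 * π / n) π) :
    smoothLog (9 / 10) n θ ≤ 0.1225 * n + 37.1 := by
  have hn' : (1000 : ℝ) ≤ n := by exact_mod_cast hn
  by_cases hfar : ∀ m : ℕ, 1 ≤ m → m ≤ 40 → 0.01 ≤ |sin (m * θ / 2)|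
  · linarith [smoothLog_le_of_far n hfar]
  push Not at hfar
  obtain ⟨m, hm1, hm40, hm⟩ := hfar
  obtain ⟨q, p, δ, hq, hqm, hpq, hθδ, hδ⟩ := exists_coprime_approx hm1 hm
  have hdilog : -imDilog ((9 / 10) ^ q) ((n + 1 / 2) * (q * |δ|)) ≤
      0.116 * q * ((n + 1 / 2) * (q * |δ|)) := by
    rcases (Nat.one_le_iff_ne_zero.2 hq.ne').eq_or_lt with rfl | hq2
    · have hbig := two_pi_le_abs_mul (by omega) hθ (by simpa using hθδ)
      simpa using neg_imDilog_nine_tenths_le (w := (n + 1 / 2) * |δ|)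
        (by nlinarith [abs_nonneg δ])
    · have hpow : (9 / 10 : ℝ) ^ q ≤ 81 / 100 :=
        (pow_le_pow_of_le_one (by norm_num) (by norm_num) hq2).trans (by norm_num)
      have hq2' : (2 : ℝ) ≤ q := by exact_mod_cast hq2
      have hw : 0 ≤ (n + 1 / 2 : ℝ) * (q * |δ|) := by positivity
      nlinarith [neg_imDilog_le (by positivity) hpow hw]
  linarith [smoothLog_le_of_near hq (hqm.trans hm40) hpq hθδ hδ hdilog]

lemma abs_sinProd_le_exp {n : ℕ} (hn : 1000 ≤ n) {θ : ℝ} (hθ : θ ∈ Icc (2 * π / n) π) :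
    |sinProd n θ| ≤ exp (0.1752 * n + 37.1) := by
  have hn' : (1000 : ℝ) ≤ n := by exact_mod_cast hn
  have hbase : (2 / (1 + 9 / 10) : ℝ) ≤ exp (1 / 19) :=
    le_trans (by norm_num) (add_one_le_exp (1 / 19 : ℝ))
  calc |sinProd n θ| ≤ (2 / (1 + 9 / 10)) ^ n * exp (smoothLog (9 / 10) n θ) :=
        abs_sinProd_le_smoothLog (by norm_num) (by norm_num) n θ
    _ ≤ exp (1 / 19) ^ n * exp (0.1225 * n + 37.1) := by
        gcongr; exact smoothLog_le hn hθ
    _ ≤ exp (0.1752 * n + 37.1) := by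
        rw [← exp_nat_mul, ← exp_add, exp_le_exp]; linarith

/-! ### The size of the main peak -/

lemma abs_sinProd_two_pi_div (n : ℕ) : |sinProd n (2 * π / (n + 1))| = n + 1 := by
  have hexp : Complex.exp (2 * π * Complex.I / (n + 1 : ℕ)) =
      Complex.exp ((2 * π / (n + 1) : ℝ) * Complex.I) := by
    congr 1
    push_cast
    ring
  have hroot : ∏ k ∈ Finset.Icc 1 n, (1 - Complex.exp ((2 * π / (n + 1) : ℝ) * Complex.I) ^ k) =
      n + 1 := by
    rw [← hexp, ← (Complex.isPrimitiveRoot_exp (n + 1) n.succ_ne_zero).prod_one_sub_pow_eq_order,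
      Finset.range_eq_Ico, Finset.prod_Ico_add' (fun k =>
        1 - Complex.exp (2 * π * Complex.I / (n + 1 : ℕ)) ^ k) 0 n 1]
    rfl
  have hnorm := congrArg norm hroot
  rw [prod_one_sub_exp_pow, norm_mul, norm_mul, norm_pow, norm_neg, Complex.norm_I, one_pow,
    one_mul, Complex.norm_exp_ofReal_mul_I, mul_one, Complex.norm_real, norm_eq_abs] at hnorm
  rw [hnorm]
  norm_cast

lemma sinProd_pos {n : ℕ} {θ : ℝ} (h0 : 0 < θ) (h1 : n * θ < 2 * π) : 0 < sinProd n θ := by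
  refine Finset.prod_pos fun k hk => mul_pos two_pos ?_
  rw [Finset.mem_Icc] at hk
  have hk1 : (1 : ℝ) ≤ k := mod_cast hk.1
  have hkn : (k : ℝ) ≤ n := mod_cast hk.2
  exact sin_pos_of_pos_of_lt_pi (by positivity) (by nlinarith)

/-- At `θ = 2π/(n+j+1)` the product of all `n + j` factors is `n + j + 1`; the last `j` of them are
estimated by `sin (π - x) ≤ x`. -/
lemma le_sinProd_mul_pow_mul_factorial {N : ℕ} (n j : ℕ) (h : n + j + 1 = N) :
    (N : ℝ) ≤ sinProd n (2 * π / N) * ((2 * π / N) ^ j * j.factorial) := by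
  have hN : (n : ℝ) + j + 1 = N := mod_cast h
  have hN0 : (0 : ℝ) < N := by rw [← hN]; positivity
  have hpos : 0 < sinProd n (2 * π / N) := by
    refine sinProd_pos (by positivity) ?_
    rw [mul_div_assoc', div_lt_iff₀ hN0]
    nlinarith [pi_pos, j.cast_nonneg (α := ℝ)]
  induction j generalizing n with
  | zero =>
    have habs := abs_sinProd_two_pi_div n
    rw [show (n : ℝ) + 1 = N by simpa using hN, abs_of_pos hpos] at habs
    simp [habs]
  | succ j ih =>
    push_cast at hN
    have hpos' : 0 < sinProd (n + 1) (2 * π / N) := by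
      refine sinProd_pos (by positivity) ?_
      rw [mul_div_assoc', div_lt_iff₀ hN0]
      push_cast
      nlinarith [pi_pos, j.cast_nonneg (α := ℝ)]
    have hsin : 2 * sin ((n + 1 : ℕ) * (2 * π / N) / 2) ≤ 2 * π / N * (j + 1) := by
      have harg : ((n + 1 : ℕ) : ℝ) * (2 * π / N) / 2 = π - π / N * (j + 1) := by
        field_simp
        push_cast
        linear_combination hN
      rw [harg, sin_pi_sub]
      have hle := sin_le (x := π / N * (j + 1)) (by positivity)
      calc 2 * sin (π / N * (j + 1)) ≤ 2 * (π / N * (j + 1)) := by linarith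
        _ = 2 * π / N * (j + 1) := by ring
    calc (N : ℝ) ≤ sinProd (n + 1) (2 * π / N) * ((2 * π / N) ^ j * j.factorial) :=
          ih (n + 1) (by omega) (by push_cast; linarith) hpos'
      _ = sinProd n (2 * π / N) * (2 * sin ((n + 1 : ℕ) * (2 * π / N) / 2)) *
            ((2 * π / N) ^ j * j.factorial) := by rw [sinProd_succ]
      _ ≤ sinProd n (2 * π / N) * (2 * π / N * (j + 1)) *
            ((2 * π / N) ^ j * j.factorial) := by gcongr
      _ = sinProd n (2 * π / N) * ((2 * π / N) ^ (j + 1) * (j + 1).factorial) := by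
        rw [Nat.factorial_succ]
        push_cast
        ring

lemma factorial_le_mul_pow {n : ℕ} (hn : n ≠ 0) :
    (n.factorial : ℝ) ≤ exp 1 * √n * (n / exp 1) ^ n := by
  obtain ⟨m, rfl⟩ := Nat.exists_eq_succ_of_ne_zero hn
  have h : Stirling.stirlingSeq (m + 1) ≤ Stirling.stirlingSeq 1 :=
    Stirling.stirlingSeq'_antitone m.zero_le
  rw [Stirling.stirlingSeq_one, Stirling.stirlingSeq, div_le_iff₀ (by positivity),
    sqrt_mul zero_le_two] at h
  refine h.trans_eq ?_
  field_simp

lemma le_sinProd_mul_sqrt_mul_pow {N : ℕ} (n : ℕ) {j : ℕ} (hj : j ≠ 0) (h : n + j + 1 = N) :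
    (N : ℝ) ≤ sinProd n (2 * π / N) * (exp 1 * √j * (2 * π / N * (j / exp 1)) ^ j) := by
  have hN : (n : ℝ) + j + 1 = N := mod_cast h
  have hpos : 0 < sinProd n (2 * π / N) := by
    refine sinProd_pos (by rw [← hN]; positivity) ?_
    rw [← hN, mul_div_assoc', div_lt_iff₀ (by positivity)]
    nlinarith [pi_pos, j.cast_nonneg (α := ℝ)]
  calc (N : ℝ) ≤ sinProd n (2 * π / N) * ((2 * π / N) ^ j * j.factorial) :=
        le_sinProd_mul_pow_mul_factorial n j h
    _ ≤ sinProd n (2 * π / N) * ((2 * π / N) ^ j * (exp 1 * √j * (j / exp 1) ^ j)) := by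
        gcongr
        exact factorial_le_mul_pow hj
    _ = sinProd n (2 * π / N) * (exp 1 * √j * (2 * π / N * (j / exp 1)) ^ j) := by
        rw [mul_pow]
        ring

lemma exp_le_sinProd : exp 1130 ≤ sinProd 5909 (2 * π / 7360) := by
  have hbase : 2 * π / 7360 * (1450 / exp 1) ≤ exp (-0.78) := by
    have hexp := quadratic_le_exp_of_nonneg (x := 0.22) (by norm_num)
    calc 2 * π / 7360 * (1450 / exp 1) = 2 * π / 7360 * 1450 / exp 1 := by ring
      _ ≤ exp 0.22 / exp 1 := by
        gcongr
        linarith [pi_lt_d4]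
      _ = exp (-0.78) := by rw [← exp_sub]; norm_num
  have hpow : exp (-0.78) ^ 1450 = exp (-1131) := by rw [← exp_nat_mul]; norm_num
  have hsqrt : √1450 ≤ 39 := sqrt_le_iff.2 (by norm_num)
  have hpos : 0 < sinProd 5909 (2 * π / 7360) := sinProd_pos (by positivity) (by linarith [pi_pos])
  have h : (7360 : ℝ) ≤ sinProd 5909 (2 * π / 7360) * (7360 / exp 1130) :=
    calc (7360 : ℝ)
        ≤ sinProd 5909 (2 * π / 7360) *
            (exp 1 * √1450 * (2 * π / 7360 * (1450 / exp 1)) ^ 1450) := by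
          exact_mod_cast le_sinProd_mul_sqrt_mul_pow (N := 7360) 5909 (j := 1450) (by norm_num) rfl
      _ ≤ sinProd 5909 (2 * π / 7360) * (3 * 39 * exp (-0.78) ^ 1450) := by
          gcongr
          exact exp_one_lt_d9.le.trans (by norm_num)
      _ ≤ sinProd 5909 (2 * π / 7360) * (7360 / exp 1130) := by
          rw [hpow, div_eq_mul_inv 7360, ← exp_neg]
          gcongr <;> norm_num
  rw [← mul_div_assoc, le_div_iff₀ (exp_pos _)] at h
  linarith

/-! ### The logarithmic derivative and its certified evaluation -/

/-- The logarithmic derivative of `sinProd n`. -/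
noncomputable def cotSum (n : ℕ) (θ : ℝ) : ℝ := ∑ k ∈ Finset.Icc 1 n, (k / 2 : ℝ) * cot (k * θ / 2)

/-- `cot (k α)` shifted by `4`, which makes it positive as long as `0 < k α ≤ 2.7`, so that its
recursion in `k` can be run in `ℕ`. -/
noncomputable def shiftedCot (α : ℝ) (k : ℕ) : ℝ := cot (k * α) + 4

/-- One step of the addition formula for `shiftedCot α`, in fixed-point arithmetic with `s` units
to `1`: here `B` approximates `s * (cot α - 4)`, and `r` is `0` to round down, `1` to round up. -/
def shiftedCotStep (s B r Y : ℕ) : ℕ := (Y * (B + 8 * s) - 17 * s ^ 2) / (Y + B) + r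

/-- `f n`, arranged so that kernel reduction evaluates `n` before entering `f`. -/
def evalFirst (n : ℕ) (f : ℕ → ℕ) : ℕ :=
  match n with
  | 0 => f 0
  | m + 1 => f (m + 1)

/-- The sum `acc + ∑ i < n, (k + i) * g^[i] y`, in a form suited to evaluation by the kernel. -/
def weightedIterateSum (g : ℕ → ℕ) : ℕ → ℕ → ℕ → ℕ → ℕ
  | 0, _, _, acc => acc
  | n + 1, k, y, acc =>
    evalFirst (acc + k * y) fun acc' => evalFirst (k + 1) fun k' => evalFirst (g y) fun y' =>
      weightedIterateSum g n k' y' acc'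

lemma evalFirst_eq (n : ℕ) (f : ℕ → ℕ) : evalFirst n f = f n := by
  cases n <;> rfl

lemma weightedIterateSum_eq (g : ℕ → ℕ) (n k y acc : ℕ) :
    weightedIterateSum g n k y acc = acc + ∑ i ∈ Finset.range n, (k + i) * g^[i] y := by
  induction n generalizing k y acc with
  | zero => simp [weightedIterateSum]
  | succ n ih =>
    rw [weightedIterateSum, evalFirst_eq, evalFirst_eq, evalFirst_eq, ih, Finset.sum_range_succ',
      add_assoc, add_comm (k * y)]
    simp only [Function.iterate_succ_apply, Function.iterate_zero, id_eq, add_zero]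
    congr 3 with i
    ring

lemma shiftedCot_pos {α : ℝ} {k : ℕ} (h0 : 0 < k * α) (h1 : k * α ≤ 2.7) :
    0 < shiftedCot α k := by
  have hsin : 0 < sin (k * α) := sin_pos_of_pos_of_lt_pi h0 (by linarith [pi_gt_three])
  rw [shiftedCot, cot_eq_cos_div_sin, div_add' _ _ _ hsin.ne']
  refine div_pos ?_ hsin
  rcases le_total (k * α) (π / 2) with h | h
  · have hcos := cos_nonneg_of_neg_pi_div_two_le_of_le (by linarith [pi_pos]) h
    linarith
  · have hjordan := mul_le_sin (x := π - k * α) (by linarith [pi_gt_three]) (by linarith)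
    have hchord : 2 / π * (π - 2.7) ≤ 2 / π * (π - k * α) := by gcongr
    have hquarter : 1 / 4 < 2 / π * (π - 2.7) := by
      field_simp
      linarith [pi_gt_d2]
    rw [sin_pi_sub] at hjordan
    linarith [neg_one_le_cos (k * α)]

lemma shiftedCot_succ {α : ℝ} {k : ℕ} (h0 : 0 < sin α) (hk : 0 < sin (k * α))
    (hk1 : 0 < sin ((k + 1 : ℕ) * α)) :
    0 < shiftedCot α k + (cot α - 4) ∧ shiftedCot α (k + 1) =
      (shiftedCot α k * (cot α - 4 + 8) - 17) / (shiftedCot α k + (cot α - 4)) := by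
  have harg : ((k + 1 : ℕ) : ℝ) * α = k * α + α := by push_cast; ring
  rw [harg, sin_add] at hk1
  have hadd : shiftedCot α k + (cot α - 4) =
      (sin (k * α) * cos α + cos (k * α) * sin α) / (sin (k * α) * sin α) := by
    rw [shiftedCot, cot_eq_cos_div_sin, cot_eq_cos_div_sin]
    field_simp
    ring
  refine ⟨by rw [hadd]; positivity, ?_⟩
  rw [hadd, eq_div_iff (by positivity), shiftedCot, shiftedCot, harg, cot_eq_cos_div_sin,
    cot_eq_cos_div_sin, cot_eq_cos_div_sin, cos_add, sin_add]
  generalize hZ : sin (k * α) * cos α + cos (k * α) * sin α = Z at hk1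
  field_simp
  linear_combination (-4) * hZ

lemma shiftedCot_succ_mono {x b y c : ℝ} (hxy : x ≤ y) (hbc : b ≤ c) (hpos : 0 < x + b) :
    (x * (b + 8) - 17) / (x + b) ≤ (y * (c + 8) - 17) / (y + c) :=
  calc (x * (b + 8) - 17) / (x + b) ≤ (y * (b + 8) - 17) / (y + b) := by
        rw [div_le_div_iff₀ hpos (by linarith)]
        linear_combination
          mul_nonneg (sub_nonneg.2 hxy) (add_nonneg (sq_nonneg (b + 4)) zero_le_one)
    _ ≤ (y * (c + 8) - 17) / (y + c) := by
        rw [div_le_div_iff₀ (by linarith) (by linarith)]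
        linear_combination
          mul_nonneg (sub_nonneg.2 hbc) (add_nonneg (sq_nonneg (y - 4)) zero_le_one)

section Rounding

variable {s B Y : ℕ} {x b : ℝ}

lemma shiftedCotStep_zero_le (hs : 0 < s) (hB0 : 0 < B) (hY : Y ≤ s * x) (hB : B ≤ s * b)
    (hpos : 0 ≤ (x * (b + 8) - 17) / (x + b)) :
    (shiftedCotStep s B 0 Y : ℝ) ≤ s * ((x * (b + 8) - 17) / (x + b)) := by
  have hs' : (0 : ℝ) < s := mod_cast hs
  have : (0 : ℝ) < B := mod_cast hB0
  rcases le_total (17 * s ^ 2) (Y * (B + 8 * s)) with hle | hle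
  · calc (shiftedCotStep s B 0 Y : ℝ) ≤ ((Y * (B + 8 * s) - 17 * s ^ 2 : ℕ) : ℝ) / (Y + B : ℕ) :=
          Nat.cast_div_le
      _ = s * ((Y / s * (B / s + 8) - 17) / (Y / s + B / s)) := by
          rw [Nat.cast_sub hle]
          push_cast
          field_simp
      _ ≤ s * ((x * (b + 8) - 17) / (x + b)) := by
          refine mul_le_mul_of_nonneg_left (shiftedCot_succ_mono ((div_le_iff₀' hs').2 hY)
            ((div_le_iff₀' hs').2 hB) (by positivity)) hs'.le
  · rw [shiftedCotStep, Nat.sub_eq_zero_of_le hle, Nat.zero_div]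
    simpa using mul_nonneg hs'.le hpos

lemma le_shiftedCotStep_one (hs : 0 < s) (hB0 : 0 < B) (hY : s * x ≤ Y) (hB : s * b ≤ B)
    (hpos : 0 < x + b) :
    s * ((x * (b + 8) - 17) / (x + b)) ≤ (shiftedCotStep s B 1 Y : ℝ) := by
  have hs' : (0 : ℝ) < s := mod_cast hs
  have : (0 : ℝ) < B := mod_cast hB0
  calc s * ((x * (b + 8) - 17) / (x + b))
      ≤ s * ((Y / s * (B / s + 8) - 17) / (Y / s + B / s)) := by
        refine mul_le_mul_of_nonneg_left (shiftedCot_succ_mono ((le_div_iff₀' hs').2 hY)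
          ((le_div_iff₀' hs').2 hB) hpos) hs'.le
    _ = ((Y * (B + 8 * s) : ℕ) - (17 * s ^ 2 : ℕ)) / ((Y + B : ℕ) : ℝ) := by
        push_cast
        field_simp
    _ ≤ ((Y * (B + 8 * s) - 17 * s ^ 2 : ℕ) : ℝ) / ((Y + B : ℕ) : ℝ) := by
        gcongr
        rw [sub_le_iff_le_add]
        exact_mod_cast le_tsub_add
    _ ≤ (shiftedCotStep s B 1 Y : ℝ) := by
        rw [shiftedCotStep, ← Nat.floor_div_eq_div (K := ℝ)]
        exact_mod_cast (Nat.lt_floor_add_one _).le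

end Rounding

section Certificate

variable {s B : ℕ} {α : ℝ}

lemma shiftedCot_succ_of_le (h0 : 0 < α) {k : ℕ} (hk0 : 0 < k) (hk : (k + 1 : ℕ) * α ≤ 2.7) :
    0 < shiftedCot α k + (cot α - 4) ∧ shiftedCot α (k + 1) =
      (shiftedCot α k * (cot α - 4 + 8) - 17) / (shiftedCot α k + (cot α - 4)) := by
  have hsin (i : ℕ) (hi0 : 0 < i) (hik : i ≤ k + 1) : 0 < sin (i * α) := by
    refine sin_pos_of_pos_of_lt_pi (by positivity) ?_
    calc i * α ≤ (k + 1 : ℕ) * α := by gcongr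
      _ < π := by linarith [pi_gt_three]
  exact shiftedCot_succ (by simpa using hsin 1 one_pos (by omega)) (hsin k hk0 (by omega))
    (hsin (k + 1) (by omega) le_rfl)

lemma iterate_shiftedCotStep_zero_le (hs : 0 < s) (hB0 : 0 < B) (h0 : 0 < α)
    (hB : B ≤ s * (cot α - 4)) {k : ℕ} (hk : (k + 1 : ℕ) * α ≤ 2.7) :
    ((shiftedCotStep s B 0)^[k] (B + 8 * s) : ℝ) ≤ s * shiftedCot α (k + 1) := by
  induction k with
  | zero =>
    simp only [shiftedCot, Function.iterate_zero, id_eq, zero_add, Nat.cast_one, one_mul]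
    push_cast
    linarith
  | succ k ih =>
    have hpos : 0 ≤ shiftedCot α (k + 1 + 1) := (shiftedCot_pos (by positivity) hk).le
    obtain ⟨-, hstep⟩ := shiftedCot_succ_of_le h0 k.succ_pos hk
    rw [hstep] at hpos ⊢
    rw [Function.iterate_succ_apply']
    exact shiftedCotStep_zero_le hs hB0 (ih (by push_cast at hk ⊢; linarith)) hB hpos

lemma le_iterate_shiftedCotStep_one (hs : 0 < s) (hB0 : 0 < B) (h0 : 0 < α)
    (hB : s * (cot α - 4) ≤ B) {k : ℕ} (hk : (k + 1 : ℕ) * α ≤ 2.7) :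
    s * shiftedCot α (k + 1) ≤ ((shiftedCotStep s B 1)^[k] (B + 8 * s) : ℝ) := by
  induction k with
  | zero =>
    simp only [shiftedCot, Function.iterate_zero, id_eq, zero_add, Nat.cast_one, one_mul]
    push_cast
    linarith
  | succ k ih =>
    obtain ⟨hpos, hstep⟩ := shiftedCot_succ_of_le h0 k.succ_pos hk
    rw [hstep, Function.iterate_succ_apply']
    exact le_shiftedCotStep_one hs hB0 (ih (by push_cast at hk ⊢; linarith)) hB hpos

end Certificate

lemma sum_mul_shiftedCot (n : ℕ) (θ : ℝ) :
    ∑ i ∈ Finset.range n, ((1 + i : ℕ) : ℝ) * shiftedCot (θ / 2) (i + 1) =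
      2 * cotSum n θ + 2 * (n * (n + 1)) := by
  induction n with
  | zero => simp [cotSum]
  | succ n ih =>
    have hsucc : cotSum (n + 1) θ =
        cotSum n θ + ((n + 1 : ℕ) / 2 : ℝ) * cot ((n + 1 : ℕ) * θ / 2) := by
      rw [cotSum, Finset.sum_Icc_succ_top (by omega), cotSum]
    rw [Finset.sum_range_succ, ih, shiftedCot, hsucc, mul_div_assoc]
    push_cast
    ring

lemma le_cot {α : ℝ} (h0 : 0 < α) (h1 : α ≤ 1) :
    (1 - α ^ 2 / 2 - α ^ 4 * (5 / 96)) / (α - α ^ 3 / 6 + α ^ 5 / 100) ≤ cot α := by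
  have hcos := abs_le.1 (cos_bound (x := α) (by rwa [abs_of_pos h0]))
  have hsin := abs_le.1 (sin_bound (x := α) (by rwa [abs_of_pos h0]))
  rw [abs_of_pos h0] at hcos hsin
  have hsin_pos : 0 < sin α := sin_pos_of_pos_of_lt_pi h0 (by linarith [pi_gt_three])
  have hcos_pos : 0 ≤ cos α := cos_nonneg_of_neg_pi_div_two_le_of_le (by linarith [pi_pos])
    (by linarith [pi_gt_three])
  rw [cot_eq_cos_div_sin]
  gcongr <;> linarith

lemma cot_le {α : ℝ} (h0 : 0 < α) (h1 : α ≤ 1) :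
    cot α ≤ (1 - α ^ 2 / 2 + α ^ 4 * (5 / 96)) / (α - α ^ 3 / 6) := by
  have hcos := abs_le.1 (cos_bound (x := α) (by rwa [abs_of_pos h0]))
  have hsin := sin_gt_sub_cube h0
  rw [abs_of_pos h0] at hcos
  have hcos_pos : 0 ≤ cos α := cos_nonneg_of_neg_pi_div_two_le_of_le (by linarith [pi_pos])
    (by linarith [pi_gt_three])
  have hden : 0 < α - α ^ 3 / 6 := by nlinarith [mul_pos h0 h0]
  rw [cot_eq_cos_div_sin]
  gcongr <;> linarith

section Bounds

variable {n s B T : ℕ} {θ g : ℝ}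

lemma le_cotSum (hs : 0 < s) (hB0 : 0 < B) (h0 : 0 < θ) (h2 : θ ≤ 2) (h1 : n * θ ≤ 5.4)
    (hB : B ≤ s * ((1 - (θ / 2) ^ 2 / 2 - (θ / 2) ^ 4 * (5 / 96)) /
      (θ / 2 - (θ / 2) ^ 3 / 6 + (θ / 2) ^ 5 / 100) - 4))
    (hT : T ≤ weightedIterateSum (shiftedCotStep s B 0) n 1 (B + 8 * s) 0)
    (hg : s * (2 * g + 2 * (n * (n + 1))) ≤ T) : g ≤ cotSum n θ := by
  have hs' : (0 : ℝ) < s := mod_cast hs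
  have hB' : B ≤ s * (cot (θ / 2) - 4) := by
    refine hB.trans ?_
    gcongr
    exact le_cot (by linarith) (by linarith)
  have hsum : s * (2 * g + 2 * (n * (n + 1))) ≤ s * (2 * cotSum n θ + 2 * (n * (n + 1))) := by
    refine (hg.trans (Nat.cast_le.2 hT)).trans ?_
    rw [weightedIterateSum_eq, zero_add, ← sum_mul_shiftedCot, Finset.mul_sum]
    push_cast
    refine Finset.sum_le_sum fun i hi => ?_
    have hle : ((i + 1 : ℕ) : ℝ) ≤ n := mod_cast Finset.mem_range.1 hi
    rw [mul_left_comm]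
    gcongr
    exact_mod_cast iterate_shiftedCotStep_zero_le hs hB0 (by positivity) hB' (by nlinarith)
  linarith [le_of_mul_le_mul_left hsum hs']

lemma cotSum_le (hs : 0 < s) (hB0 : 0 < B) (h0 : 0 < θ) (h2 : θ ≤ 2) (h1 : n * θ ≤ 5.4)
    (hB : s * ((1 - (θ / 2) ^ 2 / 2 + (θ / 2) ^ 4 * (5 / 96)) /
      (θ / 2 - (θ / 2) ^ 3 / 6) - 4) ≤ B)
    (hT : weightedIterateSum (shiftedCotStep s B 1) n 1 (B + 8 * s) 0 ≤ T)
    (hg : T ≤ s * (2 * g + 2 * (n * (n + 1)))) : cotSum n θ ≤ g := by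
  have hs' : (0 : ℝ) < s := mod_cast hs
  have hB' : s * (cot (θ / 2) - 4) ≤ B := by
    refine le_trans ?_ hB
    gcongr
    exact cot_le (by linarith) (by linarith)
  have hsum : s * (2 * cotSum n θ + 2 * (n * (n + 1))) ≤ s * (2 * g + 2 * (n * (n + 1))) := by
    refine le_trans ?_ ((Nat.cast_le.2 hT).trans hg)
    rw [weightedIterateSum_eq, zero_add, ← sum_mul_shiftedCot, Finset.mul_sum]
    push_cast
    refine Finset.sum_le_sum fun i hi => ?_
    have hle : ((i + 1 : ℕ) : ℝ) ≤ n := mod_cast Finset.mem_range.1 hi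
    rw [mul_left_comm]
    gcongr
    exact_mod_cast le_iterate_shiftedCotStep_one hs hB0 (by positivity) hB' (by nlinarith)
  linarith [le_of_mul_le_mul_left hsum hs']

end Bounds

lemma thirteen_le_cotSum : 13 ≤ cotSum 5909 (841237 / 10 ^ 9) :=
  le_cotSum (s := 10 ^ 12) (B := 2373451160675740) (T := 69844406 * 10 ^ 12)
    (by norm_num) (by norm_num) (by norm_num) (by norm_num) (by norm_num) (by norm_num)
    (by decide +kernel) (by norm_num)

lemma cotSum_le_neg_thirteen : cotSum 5909 (841238 / 10 ^ 9) ≤ -13 :=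
  cotSum_le (s := 10 ^ 12) (B := 2373448334541598) (T := 69844354 * 10 ^ 12)
    (by norm_num) (by norm_num) (by norm_num) (by norm_num) (by norm_num) (by norm_num)
    (by decide +kernel) (by norm_num)

lemma le_cotSum_left : 272669 ≤ cotSum 5909 (8310 / 10 ^ 7) :=
  le_cotSum (s := 10 ^ 12) (B := 2402738730332723) (T := 70389718 * 10 ^ 12)
    (by norm_num) (by norm_num) (by norm_num) (by norm_num) (by norm_num) (by norm_num)
    (by decide +kernel) (by norm_num)

lemma cotSum_left_le : cotSum 5909 (8310 / 10 ^ 7) ≤ 272670 :=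
  cotSum_le (s := 10 ^ 12) (B := 2402738730332732) (T := 70389720 * 10 ^ 12)
    (by norm_num) (by norm_num) (by norm_num) (by norm_num) (by norm_num) (by norm_num)
    (by decide +kernel) (by norm_num)

lemma le_cotSum_right : -280573 ≤ cotSum 5909 (8515 / 10 ^ 7) :=
  le_cotSum (s := 10 ^ 12) (B := 2344796100009337) (T := 69283234 * 10 ^ 12)
    (by norm_num) (by norm_num) (by norm_num) (by norm_num) (by norm_num) (by norm_num)
    (by decide +kernel) (by norm_num)

/-! ### Convexity of the logarithmic derivative -/

lemma mul_cot_le_one {x : ℝ} (h0 : 0 < x) (h1 : x < π) : x * cot x ≤ 1 := by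
  have hsin := sin_pos_of_pos_of_lt_pi h0 h1
  rw [cot_eq_cos_div_sin, mul_div_assoc', div_le_one hsin]
  rcases lt_or_ge x (π / 2) with h | h
  · have hcos : 0 < cos x := cos_pos_of_mem_Ioo ⟨by linarith, h⟩
    have htan := (lt_tan h0 h).le
    rwa [tan_eq_sin_div_cos, le_div_iff₀ hcos] at htan
  · have hcos : cos x ≤ 0 := cos_nonpos_of_pi_div_two_le_of_le h (by linarith)
    nlinarith

lemma one_add_sub_mul_cot_nonneg {c x : ℝ} (hc : c ∈ Icc 0 π) (hx : x ∈ Ioo 0 π) :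
    0 ≤ 1 + (c - x) * cot x := by
  have hsin := sin_pos_of_pos_of_lt_pi hx.1 hx.2
  rcases le_total x (π / 2) with h | h
  · have hcos := cos_nonneg_of_neg_pi_div_two_le_of_le (by linarith [hx.1, pi_pos]) h
    have hcot : 0 ≤ cot x := cot_eq_cos_div_sin x ▸ div_nonneg hcos hsin.le
    nlinarith [mul_cot_le_one hx.1 hx.2, hc.1]
  · have hcos := cos_nonpos_of_pi_div_two_le_of_le h (by linarith [hx.2])
    have hcot : cot x ≤ 0 :=
      cot_eq_cos_div_sin x ▸ div_nonpos_of_nonpos_of_nonneg hcos hsin.le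
    have hle := mul_cot_le_one (x := π - x) (by linarith [hx.2]) (by linarith [hx.1])
    rw [cot_eq_cos_div_sin, cos_pi_sub, sin_pi_sub, neg_div, ← cot_eq_cos_div_sin] at hle
    nlinarith [hc.2]

lemma one_add_sq_le_inv_sin_sq {x : ℝ} (h0 : 0 < x) (h1 : x < π) :
    1 + (x - π / 2) ^ 2 ≤ (sin x ^ 2)⁻¹ := by
  have hcos {y : ℝ} (hy0 : 0 ≤ y) (hy1 : y < π / 2) : 1 + y ^ 2 ≤ (cos y ^ 2)⁻¹ := by
    rw [← inv_one_add_tan_sq (cos_pos_of_mem_Ioo ⟨by linarith, hy1⟩).ne', inv_inv]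
    gcongr
    exact le_tan hy0 hy1
  rcases le_total x (π / 2) with h | h
  · rw [← cos_pi_div_two_sub, ← neg_sub, neg_sq]
    exact hcos (by linarith) (by linarith)
  · rw [← cos_sub_pi_div_two]
    exact hcos (by linarith) (by linarith)

lemma hasDerivAt_cot {x : ℝ} (hx : sin x ≠ 0) : HasDerivAt cot (-(sin x ^ 2)⁻¹) x := by
  rw [show cot = fun y => cos y / sin y from funext cot_eq_cos_div_sin]
  refine ((hasDerivAt_cos x).fun_div (hasDerivAt_sin x) hx).congr_deriv ?_
  field_simp
  linear_combination -sin_sq_add_cos_sq x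

lemma hasDerivAt_inv_sin_sq {x : ℝ} (hx : sin x ≠ 0) :
    HasDerivAt (fun y => (sin y ^ 2)⁻¹) (-2 * cot x * (sin x ^ 2)⁻¹) x := by
  refine (((hasDerivAt_sin x).fun_pow 2).fun_inv (pow_ne_zero 2 hx)).congr_deriv ?_
  rw [cot_eq_cos_div_sin]
  push_cast
  field_simp

lemma convexOn_sub_mul_cot {c : ℝ} (hc : c ∈ Icc 0 π) :
    ConvexOn ℝ (Ioo 0 π) fun x => (c - x) * cot x := by
  have hsin {x : ℝ} (hx : x ∈ Ioo 0 π) : sin x ≠ 0 := (sin_pos_of_pos_of_lt_pi hx.1 hx.2).ne'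
  have hderiv {x : ℝ} (hx : x ∈ Ioo 0 π) : HasDerivAt (fun x => (c - x) * cot x)
      (-1 * cot x + (c - x) * -(sin x ^ 2)⁻¹) x :=
    ((hasDerivAt_id x).const_sub c).mul (hasDerivAt_cot (hsin hx))
  refine convexOn_of_hasDerivWithinAt2_nonneg (convex_Ioo 0 π)
    (f' := fun x => -1 * cot x + (c - x) * -(sin x ^ 2)⁻¹)
    (f'' := fun x => 2 * (sin x ^ 2)⁻¹ * (1 + (c - x) * cot x))
    (fun x hx => (hderiv hx).continuousAt.continuousWithinAt) ?_ ?_ ?_ <;>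
    rw [interior_Ioo] <;> intro x hx
  · exact (hderiv hx).hasDerivWithinAt
  · refine HasDerivAt.hasDerivWithinAt (HasDerivAt.congr_deriv
      (((hasDerivAt_cot (hsin hx)).const_mul (-1)).fun_add
        (((hasDerivAt_id x).const_sub c).fun_mul (hasDerivAt_inv_sin_sq (hsin hx)).fun_neg)) ?_)
    simp only [id]
    ring
  · have hnonneg := one_add_sub_mul_cot_nonneg hc hx
    positivity

lemma convexOn_finset_sum {ι : Type*} {s : Set ℝ} (hs : Convex ℝ s) {t : Finset ι}
    {f : ι → ℝ → ℝ} (h : ∀ i ∈ t, ConvexOn ℝ s (f i)) :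
    ConvexOn ℝ s fun x => ∑ i ∈ t, f i x := by
  classical
  induction t using Finset.induction_on with
  | empty => simpa using convexOn_const 0 hs
  | insert i t hi ih =>
    simp only [Finset.sum_insert hi]
    exact (h i (by simp)).add (ih fun j hj => h j (by simp [hj]))

section Peak

variable {n : ℕ} {θ : ℝ}

lemma mul_div_two_mem_Ioo (hθ : θ ∈ Ioo 0 (2 * π / n)) {k : ℕ} (hk : k ∈ Finset.Icc 1 n) :
    k * θ / 2 ∈ Ioo 0 π := by
  rw [Finset.mem_Icc] at hk
  have hk1 : (1 : ℝ) ≤ k := mod_cast hk.1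
  have hkn : (k : ℝ) ≤ n := mod_cast hk.2
  have hθn := (lt_div_iff₀ (by linarith)).1 hθ.2
  have hθ0 := hθ.1
  exact ⟨by positivity, by nlinarith⟩

lemma sin_mul_div_two_ne_zero (hθ : θ ∈ Ioo 0 (2 * π / n)) {k : ℕ} (hk : k ∈ Finset.Icc 1 n) :
    sin (k * θ / 2) ≠ 0 :=
  have h := mul_div_two_mem_Ioo hθ hk
  (sin_pos_of_pos_of_lt_pi h.1 h.2).ne'

lemma convexOn_sub_mul_cotSum {c : ℝ} (hc : c ∈ Icc 0 (2 * π / n)) :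
    ConvexOn ℝ (Ioo 0 (2 * π / n)) fun θ => (c - θ) * cotSum n θ := by
  have hterm : ∀ k ∈ Finset.Icc 1 n, ConvexOn ℝ (Ioo 0 (2 * π / n))
      fun θ => (k / 2 * c - k / 2 * θ) * cot (k / 2 * θ) := by
    intro k hk
    have hkn : (k : ℝ) ≤ n := mod_cast (Finset.mem_Icc.1 hk).2
    have hn : (0 : ℝ) < n := Nat.cast_pos.2 (by rw [Finset.mem_Icc] at hk; omega)
    have hcn := (le_div_iff₀ hn).1 hc.2
    have hc0 := hc.1
    refine ((convexOn_sub_mul_cot (c := k / 2 * c) ⟨by positivity, by nlinarith⟩).comp_linearMap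
      (LinearMap.mulLeft ℝ (k / 2 : ℝ))).subset (fun θ hθ => ?_) (convex_Ioo _ _)
    simpa [div_mul_eq_mul_div] using mul_div_two_mem_Ioo hθ hk
  refine (convexOn_finset_sum (convex_Ioo _ _) hterm).congr fun θ _ => ?_
  simp only [cotSum, Finset.mul_sum]
  refine Finset.sum_congr rfl fun k _ => ?_
  rw [div_mul_eq_mul_div _ _ θ]
  ring

/-- The negated derivative of `cotSum n`. -/
noncomputable def cscSqSum (n : ℕ) (θ : ℝ) : ℝ :=
  ∑ k ∈ Finset.Icc 1 n, (k / 2 : ℝ) ^ 2 * (sin (k * θ / 2) ^ 2)⁻¹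

lemma hasDerivAt_cotSum (hθ : θ ∈ Ioo 0 (2 * π / n)) :
    HasDerivAt (cotSum n) (-cscSqSum n θ) θ := by
  rw [cscSqSum, ← Finset.sum_neg_distrib]
  refine HasDerivAt.fun_sum fun k hk => ?_
  have hinner : HasDerivAt (fun θ : ℝ => k * θ / 2) (k / 2) θ := by
    simpa using ((hasDerivAt_id θ).const_mul (k : ℝ)).div_const 2
  have hcot := (hasDerivAt_cot (sin_mul_div_two_ne_zero hθ hk)).comp θ hinner
  exact (hcot.const_mul (k / 2 : ℝ)).congr_deriv (by ring)

lemma contDiff_sinProd : ContDiff ℝ 1 (sinProd n) :=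
  contDiff_prod fun k _ => by fun_prop

lemma hasDerivAt_sinProd (hθ : θ ∈ Ioo 0 (2 * π / n)) :
    HasDerivAt (sinProd n) (sinProd n θ * cotSum n θ) θ := by
  have hfactor : ∀ k ∈ Finset.Icc 1 n, (2 : ℝ) * sin (k * θ / 2) ≠ 0 := fun k hk =>
    mul_ne_zero two_ne_zero (sin_mul_div_two_ne_zero hθ hk)
  have hlog : logDeriv (sinProd n) θ = cotSum n θ := by
    refine (logDeriv_prod (f := fun (k : ℕ) (θ : ℝ) => 2 * sin (k * θ / 2)) hfactor
      fun k _ => by fun_prop).trans (Finset.sum_congr rfl fun k _ => ?_)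
    have hinner : deriv (fun θ : ℝ => k * θ / 2) θ = k / 2 := by simp
    rw [logDeriv_const_mul _ 2 two_ne_zero,
      show (fun θ : ℝ => sin (k * θ / 2)) = sin ∘ fun θ => k * θ / 2 from rfl,
      logDeriv_comp (by fun_prop) (by fun_prop), logDeriv_sin, hinner, mul_comm]
  have hne : sinProd n θ ≠ 0 := Finset.prod_ne_zero_iff.2 hfactor
  rw [← hlog, logDeriv_apply, mul_div_cancel₀ _ hne]
  exact (contDiff_sinProd.differentiable one_ne_zero θ).hasDerivAt

lemma sum_Icc_cast_sq (n : ℕ) :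
    ∑ k ∈ Finset.Icc 1 n, (k : ℝ) ^ 2 = n * (n + 1) * (2 * n + 1) / 6 := by
  induction n with
  | zero => simp
  | succ n ih => rw [Finset.sum_Icc_succ_top (by omega), ih]; push_cast; ring

lemma sum_Icc_cast_pow_three (n : ℕ) :
    ∑ k ∈ Finset.Icc 1 n, (k : ℝ) ^ 3 = n ^ 2 * (n + 1) ^ 2 / 4 := by
  induction n with
  | zero => simp
  | succ n ih => rw [Finset.sum_Icc_succ_top (by omega), ih]; push_cast; ring

lemma sum_Icc_cast_pow_four (n : ℕ) :
    ∑ k ∈ Finset.Icc 1 n, (k : ℝ) ^ 4 =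
      n * (n + 1) * (2 * n + 1) * (3 * n ^ 2 + 3 * n - 1) / 30 := by
  induction n with
  | zero => simp
  | succ n ih => rw [Finset.sum_Icc_succ_top (by omega), ih]; push_cast; ring

lemma le_cscSqSum (hθ : θ ∈ Ioo 0 (2 * π / n)) :
    n * (n + 1) * (2 * n + 1) / 24 * (1 + π ^ 2 / 4) - π * θ * (n ^ 2 * (n + 1) ^ 2 / 32) +
      θ ^ 2 * (n * (n + 1) * (2 * n + 1) * (3 * n ^ 2 + 3 * n - 1) / 480) ≤ cscSqSum n θ := by
  calc _ = ∑ k ∈ Finset.Icc 1 n, ((1 + π ^ 2 / 4) / 4 * (k : ℝ) ^ 2 - π * θ / 8 * (k : ℝ) ^ 3 +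
        θ ^ 2 / 16 * (k : ℝ) ^ 4) := by
        rw [Finset.sum_add_distrib, Finset.sum_sub_distrib, ← Finset.mul_sum, ← Finset.mul_sum,
          ← Finset.mul_sum, sum_Icc_cast_sq, sum_Icc_cast_pow_three, sum_Icc_cast_pow_four]
        ring
    _ = ∑ k ∈ Finset.Icc 1 n, (k / 2 : ℝ) ^ 2 * (1 + (k * θ / 2 - π / 2) ^ 2) :=
        Finset.sum_congr rfl fun k _ => by ring
    _ ≤ cscSqSum n θ := by
        refine Finset.sum_le_sum fun k hk => ?_
        have h := mul_div_two_mem_Ioo hθ hk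
        gcongr
        exact one_add_sq_le_inv_sin_sq h.1 h.2

lemma le_cscSqSum_5909 (hθ : θ ∈ Ioo 0 (2 * π / (5909 : ℕ))) :
    195 * 10 ^ 8 ≤ cscSqSum 5909 θ := by
  have h := le_cscSqSum hθ
  norm_num at h
  have hπ : (9.869 : ℝ) ≤ π ^ 2 := by nlinarith [pi_gt_d4]
  -- the leading form in `(θ, π)` is positive definite: complete the square in `θ`
  nlinarith [sq_nonneg (θ * (1441397187202571803 / 16) - π * (304889838599025 / 16))]

lemma sinProd_zero_right (hn : 1 ≤ n) : sinProd n 0 = 0 :=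
  Finset.prod_eq_zero (Finset.mem_Icc.2 ⟨le_rfl, hn⟩) (by simp)

lemma sinProd_two_pi_div (hn : 1 ≤ n) : sinProd n (2 * π / n) = 0 := by
  have hn0 : (n : ℝ) ≠ 0 := mod_cast (by omega : n ≠ 0)
  refine Finset.prod_eq_zero (Finset.mem_Icc.2 ⟨hn, le_rfl⟩) ?_
  rw [show (n : ℝ) * (2 * π / n) / 2 = π by field_simp, sin_pi, mul_zero]

end Peak

/-! ### Integrals over the main peak -/

/-- The integral of `g` over the main peak `(0, 2 * π / n)` with weight `sinProd n`. -/
noncomputable def peakIntegral (n : ℕ) (g : ℝ → ℝ) : ℝ :=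
  ∫ θ in 0..2 * π / n, sinProd n θ * g θ

section PeakIntegral

variable {n : ℕ} {f g : ℝ → ℝ}

lemma intervalIntegrable_sinProd_mul (hf : Continuous f) (u v : ℝ) :
    IntervalIntegrable (fun θ => sinProd n θ * f θ) MeasureTheory.volume u v :=
  ((continuous_sinProd n).mul hf).intervalIntegrable u v

lemma peakIntegral_add (hf : Continuous f) (hg : Continuous g) :
    peakIntegral n (fun θ => f θ + g θ) = peakIntegral n f + peakIntegral n g := by
  simp only [peakIntegral, mul_add]
  exact integral_add (intervalIntegrable_sinProd_mul hf _ _) (intervalIntegrable_sinProd_mul hg _ _)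

lemma peakIntegral_sub (hf : Continuous f) (hg : Continuous g) :
    peakIntegral n (fun θ => f θ - g θ) = peakIntegral n f - peakIntegral n g := by
  simp only [peakIntegral, mul_sub]
  exact integral_sub (intervalIntegrable_sinProd_mul hf _ _) (intervalIntegrable_sinProd_mul hg _ _)

lemma peakIntegral_const_mul (c : ℝ) (f : ℝ → ℝ) :
    peakIntegral n (fun θ => c * f θ) = c * peakIntegral n f := by
  simp only [peakIntegral, mul_left_comm _ c]
  exact integral_const_mul _ _

lemma sinProd_pos_of_mem_Ioo {θ : ℝ} (hθ : θ ∈ Ioo 0 (2 * π / n)) : 0 < sinProd n θ := by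
  have hn : (0 : ℝ) < n := by
    by_contra! h
    exact absurd (hθ.1.trans hθ.2) (div_nonpos_of_nonneg_of_nonpos two_pi_pos.le h).not_gt
  exact sinProd_pos hθ.1 ((lt_div_iff₀' hn).1 hθ.2)

lemma sinProd_nonneg_of_mem_Icc {θ : ℝ} (hθ : θ ∈ Icc 0 (2 * π / n)) : 0 ≤ sinProd n θ := by
  rcases n.eq_zero_or_pos with rfl | hn
  · simp [sinProd]
  rcases hθ.1.eq_or_lt with rfl | h0
  · rw [sinProd_zero_right hn]
  rcases hθ.2.eq_or_lt with rfl | hb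
  · rw [sinProd_two_pi_div hn]
  exact (sinProd_pos_of_mem_Ioo ⟨h0, hb⟩).le

lemma peakIntegral_mono (hf : Continuous f) (hg : Continuous g)
    (h : ∀ θ ∈ Ioo 0 (2 * π / n), f θ ≤ g θ) : peakIntegral n f ≤ peakIntegral n g :=
  integral_mono_on_of_le_Ioo (by positivity) (intervalIntegrable_sinProd_mul hf _ _)
    (intervalIntegrable_sinProd_mul hg _ _) fun θ hθ =>
      mul_le_mul_of_nonneg_left (h θ hθ) (sinProd_pos_of_mem_Ioo hθ).le

lemma abs_peakIntegral_le (f : ℝ → ℝ) :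
    |peakIntegral n f| ≤ peakIntegral n fun θ => |f θ| := by
  have hb : 0 ≤ 2 * π / n := by positivity
  refine (abs_integral_le_integral_abs hb).trans_eq (integral_congr fun θ hθ => ?_)
  rw [uIcc_of_le hb] at hθ
  rw [abs_mul, abs_of_nonneg (sinProd_nonneg_of_mem_Icc hθ)]

/-- Integration by parts: `sinProd n * cotSum n` is the derivative of `sinProd n`, which vanishes at
both ends of the peak. -/
lemma peakIntegral_nonneg_of_hasDerivAt {g' φ : ℝ → ℝ} (hg : ∀ θ, HasDerivAt g (g' θ) θ)
    (hg' : Continuous g') (hφ : Continuous φ)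
    (h : ∀ θ ∈ Ioo 0 (2 * π / n), g' θ + g θ * cotSum n θ ≤ φ θ) : 0 ≤ peakIntegral n φ := by
  rcases n.eq_zero_or_pos with rfl | hn
  · simp [peakIntegral]
  have hgc : Continuous g := continuous_iff_continuousAt.2 fun θ => (hg θ).continuousAt
  have hP' : Continuous (deriv (sinProd n)) := contDiff_sinProd.continuous_deriv le_rfl
  have hint : IntervalIntegrable (fun θ => deriv (sinProd n) θ * g θ + sinProd n θ * g' θ)
      MeasureTheory.volume 0 (2 * π / n) :=
    ((hP'.mul hgc).add ((continuous_sinProd n).mul hg')).intervalIntegrable _ _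
  calc (0 : ℝ) = ∫ θ in 0..2 * π / n, (deriv (sinProd n) θ * g θ + sinProd n θ * g' θ) := by
        rw [integral_deriv_mul_eq_sub (fun θ _ => (contDiff_sinProd.differentiable one_ne_zero
          θ).hasDerivAt) (fun θ _ => hg θ) (hP'.intervalIntegrable _ _)
          (hg'.intervalIntegrable _ _), sinProd_zero_right hn, sinProd_two_pi_div hn]
        ring
    _ ≤ peakIntegral n φ := by
        refine integral_mono_on_of_le_Ioo (by positivity) hint
          (intervalIntegrable_sinProd_mul hφ _ _) fun θ hθ => ?_
        rw [(hasDerivAt_sinProd hθ).deriv]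
        linarith [mul_le_mul_of_nonneg_left (h θ hθ) (sinProd_pos_of_mem_Ioo hθ).le]

end PeakIntegral

lemma isMaxOn_of_sub_mul_deriv_nonpos {S : Set ℝ} (hS : Convex ℝ S) {f f' : ℝ → ℝ} {x : ℝ}
    (hx : x ∈ S) (hf : ∀ θ ∈ S, HasDerivAt f (f' θ) θ) (hf' : ∀ θ ∈ S, (θ - x) * f' θ ≤ 0) :
    IsMaxOn f S x := by
  intro θ hθ
  have hcont : ∀ {u v}, u ∈ S → v ∈ S → ContinuousOn f (Icc u v) := fun hu hv y hy =>
    (hf y (hS.ordConnected.out hu hv hy)).continuousAt.continuousWithinAt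
  rcases le_total x θ with h | h
  · refine antitoneOn_of_hasDerivWithinAt_nonpos (convex_Icc x θ) (hcont hx hθ) (f' := f')
      (fun y hy => ?_) (fun y hy => ?_) ⟨le_rfl, h⟩ ⟨h, le_rfl⟩ h
    · exact (hf y (hS.ordConnected.out hx hθ (interior_subset hy))).hasDerivWithinAt
    · have hxy : x < y := by rw [interior_Icc] at hy; exact hy.1
      exact nonpos_of_mul_nonpos_right (hf' y (hS.ordConnected.out hx hθ (interior_subset hy)))
        (sub_pos.2 hxy)
  · refine monotoneOn_of_hasDerivWithinAt_nonneg (convex_Icc θ x) (hcont hθ hx) (f' := f')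
      (fun y hy => ?_) (fun y hy => ?_) ⟨le_rfl, h⟩ ⟨h, le_rfl⟩ h
    · exact (hf y (hS.ordConnected.out hθ hx (interior_subset hy))).hasDerivWithinAt
    · have hyx : y < x := by rw [interior_Icc] at hy; exact hy.2
      exact nonneg_of_mul_nonpos_right (hf' y (hS.ordConnected.out hθ hx (interior_subset hy)))
        (sub_neg.2 hyx)

section CriticalPoint

variable {n : ℕ} {x θ K : ℝ}

lemma sub_mul_cotSum_le (hK : ∀ θ ∈ Ioo 0 (2 * π / n), K ≤ cscSqSum n θ)
    (hx : x ∈ Ioo 0 (2 * π / n)) (h0 : cotSum n x = 0) (hθ : θ ∈ Ioo 0 (2 * π / n)) :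
    (θ - x) * cotSum n θ ≤ -(K * (θ - x) ^ 2) := by
  have hslope : ∀ u ∈ Ioo 0 (2 * π / n), ∀ v ∈ Ioo 0 (2 * π / n), u ≤ v →
      cotSum n v - cotSum n u ≤ -K * (v - u) := by
    refine (convex_Ioo _ _).image_sub_le_mul_sub_of_deriv_le
      (fun θ hθ => (hasDerivAt_cotSum hθ).continuousAt.continuousWithinAt) ?_ ?_ <;>
      rw [interior_Ioo] <;> intro θ hθ
    · exact (hasDerivAt_cotSum hθ).differentiableAt.differentiableWithinAt
    · rw [(hasDerivAt_cotSum hθ).deriv]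
      exact neg_le_neg (hK θ hθ)
  rcases le_total x θ with h | h
  · nlinarith [hslope x hx θ hθ h]
  · nlinarith [hslope θ hθ x hx h]

lemma tangent_le_sub_mul_cotSum {c : ℝ} (hc : c ∈ Icc 0 (2 * π / n))
    (hx : x ∈ Ioo 0 (2 * π / n)) (h0 : cotSum n x = 0) (hθ : θ ∈ Ioo 0 (2 * π / n)) :
    -((c - x) * cscSqSum n x) * (θ - x) ≤ (c - θ) * cotSum n θ := by
  have hconv := convexOn_sub_mul_cotSum hc
  have hderiv : HasDerivAt (fun θ => (c - θ) * cotSum n θ) (-((c - x) * cscSqSum n x)) x :=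
    (((hasDerivAt_id x).const_sub c).fun_mul (hasDerivAt_cotSum hx)).congr_deriv (by simp [h0])
  rcases lt_trichotomy x θ with h | rfl | h
  · have hs := hconv.le_slope_of_hasDerivAt hx hθ h hderiv
    rw [slope_def_field, le_div_iff₀ (sub_pos.2 h), h0] at hs
    linarith
  · simp [h0]
  · have hs := hconv.slope_le_of_hasDerivAt hθ hx h hderiv
    rw [slope_def_field, div_le_iff₀ (sub_pos.2 h), h0] at hs
    linarith

/-- Secants of `(2 * π / n - θ) * cotSum n θ` (left of `x`) and of `-θ * cotSum n θ` (right of `x`),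
both convex and zero at `x`, against the endpoints `p` and `q`. -/
lemma neg_mul_sq_le_sub_mul_cotSum {p q : ℝ} (hx : x ∈ Ioo 0 (2 * π / n)) (h0 : cotSum n x = 0)
    (hK : 0 ≤ K) (hp : p ∈ Ioo 0 x) (hq : q ∈ Ioo x (2 * π / n))
    (hpK : (2 * π / n - p) * cotSum n p ≤ K * ((2 * π / n - x) * (x - p)))
    (hqK : -(q * cotSum n q) ≤ K * (x * (q - x))) (hθ : θ ∈ Icc p q) :
    -(K * (θ - x) ^ 2) ≤ (θ - x) * cotSum n θ := by
  obtain ⟨hp0, hpx⟩ := hp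
  obtain ⟨hxq, hqb⟩ := hq
  have hθI : θ ∈ Ioo 0 (2 * π / n) := ⟨hp0.trans_le hθ.1, hθ.2.trans_lt hqb⟩
  have hb : 0 < 2 * π / n := hx.1.trans hx.2
  rcases lt_trichotomy θ x with h | rfl | h
  · have hs := (convexOn_sub_mul_cotSum ⟨hb.le, le_rfl⟩).secant_mono hx ⟨hp0, hpx.trans hx.2⟩ hθI
      hpx.ne h.ne hθ.1
    simp only [h0, mul_zero, sub_zero] at hs
    have hpK' : (2 * π / n - p) * cotSum n p / (x - p) ≤ K * (2 * π / n - x) := by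
      rw [div_le_iff₀ (sub_pos.2 hpx)]; linarith
    have hθs : (2 * π / n - θ) * cotSum n θ / (x - θ) ≤ K * (2 * π / n - θ) := by
      rw [← neg_sub x, ← neg_sub x, div_neg, div_neg] at hs
      nlinarith
    rw [div_le_iff₀ (sub_pos.2 h), mul_comm K, mul_assoc,
      mul_le_mul_iff_right₀ (sub_pos.2 hθI.2)] at hθs
    nlinarith [mul_le_mul_of_nonneg_left hθs (sub_pos.2 h).le]
  · simp
  · have hs := (convexOn_sub_mul_cotSum (c := 0) ⟨le_rfl, hb.le⟩).secant_mono hx hθI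
      ⟨hx.1.trans hxq, hqb⟩ h.ne' hxq.ne' hθ.2
    simp only [h0, mul_zero, sub_zero, zero_sub, neg_mul] at hs
    have hqK' : -(q * cotSum n q) / (q - x) ≤ K * x := by
      rw [div_le_iff₀ (sub_pos.2 hxq)]; linarith
    have hθs : -(θ * cotSum n θ) / (θ - x) ≤ θ * K := by
      nlinarith
    rw [div_le_iff₀ (sub_pos.2 h), ← mul_neg, mul_assoc, mul_le_mul_iff_right₀ hθI.1] at hθs
    nlinarith [mul_le_mul_of_nonneg_left hθs (sub_pos.2 h).le]

lemma hasDerivAt_log_sinProd_add_sq (K x : ℝ) (hθ : θ ∈ Ioo 0 (2 * π / n)) :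
    HasDerivAt (fun θ => log (sinProd n θ) + K * (θ - x) ^ 2 / 2) (cotSum n θ + K * (θ - x)) θ := by
  have hP := sinProd_pos_of_mem_Ioo hθ
  have hsq := (((((hasDerivAt_id θ).sub_const x).pow 2).const_mul K).div_const 2)
  refine (((hasDerivAt_sinProd hθ).log hP.ne').add hsq).congr_deriv ?_
  rw [mul_div_cancel_left₀ _ hP.ne']
  simp only [id_eq]
  ring

lemma sinProd_le_mul_exp (hK : ∀ θ ∈ Ioo 0 (2 * π / n), K ≤ cscSqSum n θ)
    (hx : x ∈ Ioo 0 (2 * π / n)) (h0 : cotSum n x = 0) (hθ : θ ∈ Ioo 0 (2 * π / n)) :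
    sinProd n θ ≤ sinProd n x * exp (-(K * (θ - x) ^ 2 / 2)) := by
  have hmax := isMaxOn_of_sub_mul_deriv_nonpos (convex_Ioo _ _) hx
    (fun θ hθ => hasDerivAt_log_sinProd_add_sq K x hθ)
    (fun θ hθ => by linarith [sub_mul_cotSum_le hK hx h0 hθ]) hθ
  simp only [mem_ofPred_eq, sub_self] at hmax
  rw [← exp_log (sinProd_pos_of_mem_Ioo hθ), ← exp_log (sinProd_pos_of_mem_Ioo hx), ← exp_add]
  exact exp_le_exp.2 (by linarith)

lemma mul_exp_le_sinProd {S : Set ℝ} (hS : Convex ℝ S) (hSI : S ⊆ Ioo 0 (2 * π / n)) (hx : x ∈ S)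
    (hK : ∀ θ ∈ S, -(K * (θ - x) ^ 2) ≤ (θ - x) * cotSum n θ) (hθ : θ ∈ S) :
    sinProd n x * exp (-(K * (θ - x) ^ 2 / 2)) ≤ sinProd n θ := by
  have hmax := isMaxOn_of_sub_mul_deriv_nonpos hS hx
    (fun θ hθ => (hasDerivAt_log_sinProd_add_sq K x (hSI hθ)).neg)
    (fun θ hθ => by linarith [hK θ hθ]) hθ
  simp only [mem_ofPred_eq, sub_self, Pi.neg_apply] at hmax
  rw [← exp_log (sinProd_pos_of_mem_Ioo (hSI hθ)), ← exp_log (sinProd_pos_of_mem_Ioo (hSI hx)),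
    ← exp_add]
  exact exp_le_exp.2 (by linarith)

lemma mul_integral_le_peakIntegral {r : ℝ} {φ : ℝ → ℝ} (hr : 0 ≤ r) (hK0 : 0 ≤ K)
    (hI : Icc (x - r) (x + r) ⊆ Ioo 0 (2 * π / n))
    (hK : ∀ θ ∈ Icc (x - r) (x + r), -(K * (θ - x) ^ 2) ≤ (θ - x) * cotSum n θ)
    (hφ : Continuous φ) (hφ0 : ∀ θ, 0 ≤ φ θ) :
    sinProd n x * exp (-(K * r ^ 2 / 2)) * ∫ θ in x - r..x + r, φ θ ≤ peakIntegral n φ := by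
  have hxr : x - r ≤ x + r := by linarith
  have hx : x ∈ Icc (x - r) (x + r) := ⟨by linarith, by linarith⟩
  have hwindow : ∀ θ ∈ Icc (x - r) (x + r),
      sinProd n x * exp (-(K * r ^ 2 / 2)) * φ θ ≤ sinProd n θ * φ θ := by
    refine fun θ hθ => mul_le_mul_of_nonneg_right ?_ (hφ0 θ)
    refine le_trans ?_ (mul_exp_le_sinProd (convex_Icc _ _) hI hx hK hθ)
    have hP := sinProd_pos_of_mem_Ioo (hI hx)
    have hsq : (θ - x) ^ 2 ≤ r ^ 2 := sq_le_sq' (by linarith [hθ.1]) (by linarith [hθ.2])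
    gcongr
  rw [← integral_const_mul]
  refine (integral_mono_on hxr ((hφ.const_mul _).intervalIntegrable _ _)
    (intervalIntegrable_sinProd_mul hφ _ _) hwindow).trans ?_
  refine integral_mono_interval (hI ⟨le_rfl, hxr⟩).1.le hxr (hI ⟨hxr, le_rfl⟩).2.le ?_
    (intervalIntegrable_sinProd_mul hφ _ _)
  refine (MeasureTheory.ae_restrict_iff' measurableSet_Ioc).2 (Filter.Eventually.of_forall ?_)
  exact fun θ hθ => mul_nonneg (sinProd_nonneg_of_mem_Icc (Ioc_subset_Icc_self hθ)) (hφ0 θ)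

lemma peakIntegral_one_le (hK0 : 0 < K) (hK : ∀ θ ∈ Ioo 0 (2 * π / n), K ≤ cscSqSum n θ)
    (hx : x ∈ Ioo 0 (2 * π / n)) (h0 : cotSum n x = 0) :
    peakIntegral n (fun _ => 1) ≤ sinProd n x * √(2 * π / K) := by
  have hb : 0 ≤ 2 * π / n := by positivity
  have hgauss : Continuous fun θ => exp (-(K / 2) * (θ - x) ^ 2) := by fun_prop
  have hint : MeasureTheory.Integrable fun θ => exp (-(K / 2) * (θ - x) ^ 2) :=
    (integrable_exp_neg_mul_sq (half_pos hK0)).comp_sub_right x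
  have htotal : ∫ θ, exp (-(K / 2) * (θ - x) ^ 2) = √(2 * π / K) := by
    rw [MeasureTheory.integral_sub_right_eq_self (fun θ => exp (-(K / 2) * θ ^ 2)),
      integral_gaussian]
    congr 1
    field_simp
  rw [← htotal, peakIntegral]
  simp only [mul_one]
  calc ∫ θ in 0..2 * π / n, sinProd n θ
      ≤ ∫ θ in 0..2 * π / n, sinProd n x * exp (-(K / 2) * (θ - x) ^ 2) := by
        refine integral_mono_on_of_le_Ioo hb ((continuous_sinProd n).intervalIntegrable _ _)
          ((hgauss.const_mul _).intervalIntegrable _ _) fun θ hθ => ?_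
        convert sinProd_le_mul_exp hK hx h0 hθ using 3
        ring
    _ ≤ sinProd n x * ∫ θ, exp (-(K / 2) * (θ - x) ^ 2) := by
        rw [integral_const_mul, integral_of_le hb]
        exact mul_le_mul_of_nonneg_left (MeasureTheory.setIntegral_le_integral hint
          (Filter.Eventually.of_forall fun θ => (exp_pos _).le)) (sinProd_pos_of_mem_Ioo hx).le

lemma mul_peakIntegral_pow_le (hK : ∀ θ ∈ Ioo 0 (2 * π / n), K ≤ cscSqSum n θ)
    (hx : x ∈ Ioo 0 (2 * π / n)) (h0 : cotSum n x = 0) (k : ℕ) :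
    K * peakIntegral n (fun θ => (θ - x) ^ (2 * k + 2)) ≤
      (2 * k + 1) * peakIntegral n fun θ => (θ - x) ^ (2 * k) := by
  rw [← sub_nonneg, ← peakIntegral_const_mul, ← peakIntegral_const_mul,
    ← peakIntegral_sub (by fun_prop) (by fun_prop)]
  refine peakIntegral_nonneg_of_hasDerivAt (g := fun θ => (θ - x) ^ (2 * k + 1))
    (g' := fun θ => (2 * k + 1) * (θ - x) ^ (2 * k)) (fun θ => ?_) (by fun_prop) (by fun_prop)
    fun θ hθ => ?_
  · simpa using ((hasDerivAt_id θ).sub_const x).fun_pow (2 * k + 1)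
  · have hpow : 0 ≤ (θ - x) ^ (2 * k) := by rw [pow_mul]; positivity
    have hmul := mul_le_mul_of_nonneg_left (sub_mul_cotSum_le hK hx h0 hθ) hpow
    rw [pow_add _ (2 * k) 1, pow_add _ (2 * k) 2]
    linarith

lemma pow_mul_peakIntegral_pow_le (hK0 : 0 ≤ K) (hK : ∀ θ ∈ Ioo 0 (2 * π / n), K ≤ cscSqSum n θ)
    (hx : x ∈ Ioo 0 (2 * π / n)) (h0 : cotSum n x = 0) (k : ℕ) :
    K ^ k * peakIntegral n (fun θ => (θ - x) ^ (2 * k)) ≤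
      ((2 * k - 1).doubleFactorial : ℝ) * peakIntegral n fun _ => 1 := by
  induction k with
  | zero => simp
  | succ k ih =>
    have hdf : (2 * (k + 1) - 1).doubleFactorial = (2 * k + 1) * (2 * k - 1).doubleFactorial :=
      Nat.doubleFactorial_add_one (2 * k)
    calc K ^ (k + 1) * peakIntegral n (fun θ => (θ - x) ^ (2 * (k + 1)))
        = K ^ k * (K * peakIntegral n fun θ => (θ - x) ^ (2 * k + 2)) := by
          rw [pow_succ, mul_assoc, mul_add_one]
      _ ≤ K ^ k * ((2 * k + 1) * peakIntegral n fun θ => (θ - x) ^ (2 * k)) :=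
          mul_le_mul_of_nonneg_left (mul_peakIntegral_pow_le hK hx h0 k) (pow_nonneg hK0 k)
      _ = (2 * k + 1) * (K ^ k * peakIntegral n fun θ => (θ - x) ^ (2 * k)) := by ring
      _ ≤ (2 * k + 1) * ((2 * k - 1).doubleFactorial * peakIntegral n fun _ => 1) := by gcongr
      _ = _ := by rw [hdf]; push_cast; ring

lemma hasDerivAt_sin_half (θ : ℝ) : HasDerivAt (fun θ => sin (θ / 2)) (cos (θ / 2) / 2) θ :=
  (((hasDerivAt_id θ).div_const 2).sin).congr_deriv (by simp [div_eq_mul_inv])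

lemma half_mem_Ioo_of_mem_peak (hn : 2 ≤ n) (hθ : θ ∈ Ioo 0 (2 * π / n)) :
    θ / 2 ∈ Ioo 0 (π / 2) := by
  have hn' : (2 : ℝ) ≤ n := mod_cast hn
  have hb : 2 * π / n ≤ π := by
    rw [div_le_iff₀ (by linarith)]
    nlinarith [pi_pos]
  exact ⟨by linarith [hθ.1], by linarith [hθ.2]⟩

lemma mul_peakIntegral_sin_half_mul_le (hn : 2 ≤ n) (hx : x ∈ Ioo 0 (2 * π / n))
    (h0 : cotSum n x = 0) :
    x * cscSqSum n x * peakIntegral n (fun θ => sin (θ / 2) * (θ - x)) ≤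
      2 * peakIntegral n fun θ => sin (θ / 2) := by
  rw [← sub_nonneg, ← peakIntegral_const_mul, ← peakIntegral_const_mul,
    ← peakIntegral_sub (by fun_prop) (by fun_prop)]
  refine peakIntegral_nonneg_of_hasDerivAt
    (fun θ => (hasDerivAt_id θ).fun_mul (hasDerivAt_sin_half θ)) (by simp only [id_eq]; fun_prop)
    (by fun_prop) fun θ hθ => ?_
  have hhalf := half_mem_Ioo_of_mem_peak hn hθ
  have hsin := sin_pos_of_pos_of_lt_pi hhalf.1 (by linarith [hhalf.2, pi_pos])
  have hcot := mul_cot_le_one hhalf.1 (by linarith [hhalf.2, pi_pos])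
  rw [cot_eq_cos_div_sin, mul_div_assoc', div_le_one hsin] at hcot
  have htan := mul_le_mul_of_nonneg_left
    (tangent_le_sub_mul_cotSum ⟨le_rfl, (hx.1.trans hx.2).le⟩ hx h0 hθ) hsin.le
  simp only [id_eq]
  linarith

lemma neg_peakIntegral_sin_half_le (hn : 2 ≤ n) (hx : x ∈ Ioo 0 (2 * π / n))
    (h0 : cotSum n x = 0) :
    -peakIntegral n (fun θ => sin (θ / 2)) ≤
      (2 * π / n - x) * cscSqSum n x * peakIntegral n fun θ => sin (θ / 2) * (θ - x) := by
  rw [neg_le_iff_add_nonneg, ← peakIntegral_const_mul, ← peakIntegral_add (by fun_prop)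
    (by fun_prop)]
  refine peakIntegral_nonneg_of_hasDerivAt
    (fun θ => ((hasDerivAt_id θ).sub_const (2 * π / n)).fun_mul (hasDerivAt_sin_half θ))
    (by simp only [id_eq]; fun_prop) (by fun_prop) fun θ hθ => ?_
  have hhalf := half_mem_Ioo_of_mem_peak hn hθ
  have hsin := sin_pos_of_pos_of_lt_pi hhalf.1 (by linarith [hhalf.2, pi_pos])
  have hcos := cos_nonneg_of_neg_pi_div_two_le_of_le (by linarith [hhalf.1, pi_pos]) hhalf.2.le
  have htan := mul_le_mul_of_nonneg_left
    (tangent_le_sub_mul_cotSum ⟨(hx.1.trans hx.2).le, le_rfl⟩ hx h0 hθ) hsin.le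
  have hdrop := mul_nonneg (sub_pos.2 hθ.2).le hcos
  simp only [id_eq]
  linarith

end CriticalPoint

/-! ### The frequency at which the differences change sign -/

lemma lt_two_pi_div_5909 : 106332 / 10 ^ 8 < 2 * π / (5909 : ℕ) := by
  rw [lt_div_iff₀ (by norm_num)]
  norm_num
  linarith [pi_gt_d6]

lemma two_pi_div_5909_lt : 2 * π / (5909 : ℕ) < 106333 / 10 ^ 8 := by
  rw [div_lt_iff₀ (by norm_num)]
  norm_num
  linarith [pi_lt_d6]

lemma exists_cotSum_eq_zero :
    ∃ x ∈ Ioo (841237 / 10 ^ 9 : ℝ) (841238 / 10 ^ 9), cotSum 5909 x = 0 := by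
  have hcont : ContinuousOn (cotSum 5909) (Icc (841237 / 10 ^ 9 : ℝ) (841238 / 10 ^ 9)) := by
    refine fun θ hθ => (hasDerivAt_cotSum ⟨by linarith [hθ.1], ?_⟩).continuousAt.continuousWithinAt
    linarith [hθ.2, lt_two_pi_div_5909]
  refine intermediate_value_Ioo' (by norm_num) hcont ⟨?_, ?_⟩
  · linarith [cotSum_le_neg_thirteen]
  · linarith [thirteen_le_cotSum]

/-- The point of the main peak at which `sinProd 5909` is maximal. -/
noncomputable def peakPoint : ℝ :=
  exists_cotSum_eq_zero.choose

lemma lt_peakPoint : 841237 / 10 ^ 9 < peakPoint :=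
  exists_cotSum_eq_zero.choose_spec.1.1

lemma peakPoint_lt : peakPoint < 841238 / 10 ^ 9 :=
  exists_cotSum_eq_zero.choose_spec.1.2

lemma cotSum_peakPoint : cotSum 5909 peakPoint = 0 :=
  exists_cotSum_eq_zero.choose_spec.2

lemma peakPoint_mem_Ioo : peakPoint ∈ Ioo 0 (2 * π / (5909 : ℕ)) :=
  ⟨by linarith [lt_peakPoint], by linarith [peakPoint_lt, lt_two_pi_div_5909]⟩

lemma sinProd_peakPoint_pos : 0 < sinProd 5909 peakPoint :=
  sinProd_pos_of_mem_Ioo peakPoint_mem_Ioo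

lemma le_cscSqSum_peakPoint : 26 * 10 ^ 9 ≤ cscSqSum 5909 peakPoint := by
  have hl := lt_peakPoint
  have hu := peakPoint_lt
  have htan := tangent_le_sub_mul_cotSum (c := 0) (θ := 8310 / 10 ^ 7) ⟨le_rfl, by positivity⟩
    peakPoint_mem_Ioo cotSum_peakPoint ⟨by norm_num, by linarith [lt_two_pi_div_5909]⟩
  have hcot := le_cotSum_left
  have hprod : peakPoint * (peakPoint - 8310 / 10 ^ 7) ≤
      841238 / 10 ^ 9 * (841238 / 10 ^ 9 - 8310 / 10 ^ 7) := by gcongr; linarith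
  by_contra! hlt
  have hmul := mul_le_mul_of_nonneg_left hlt.le
    (mul_nonneg (by linarith) (by linarith) : 0 ≤ peakPoint * (peakPoint - 8310 / 10 ^ 7))
  nlinarith

lemma neg_mul_sq_le_sub_peakPoint_mul_cotSum {θ : ℝ}
    (hθ : θ ∈ Icc (8310 / 10 ^ 7) (8515 / 10 ^ 7)) :
    -(28 * 10 ^ 9 * (θ - peakPoint) ^ 2) ≤ (θ - peakPoint) * cotSum 5909 θ := by
  have hl := lt_peakPoint
  have hu := peakPoint_lt
  have hbl := lt_two_pi_div_5909
  have hbu := two_pi_div_5909_lt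
  refine neg_mul_sq_le_sub_mul_cotSum peakPoint_mem_Ioo cotSum_peakPoint (by norm_num)
    ⟨by norm_num, by linarith⟩ ⟨by linarith, by linarith⟩ ?_ ?_ hθ
  · have hcot0 := le_cotSum_left
    calc (2 * π / (5909 : ℕ) - 8310 / 10 ^ 7) * cotSum 5909 (8310 / 10 ^ 7)
        ≤ (106333 / 10 ^ 8 - 8310 / 10 ^ 7) * 272670 := by
          gcongr
          exact cotSum_left_le
      _ ≤ 28 * 10 ^ 9 * ((106332 / 10 ^ 8 - 841238 / 10 ^ 9) *
          (841237 / 10 ^ 9 - 8310 / 10 ^ 7)) := by norm_num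
      _ ≤ _ := by gcongr; linarith
  · calc -(8515 / 10 ^ 7 * cotSum 5909 (8515 / 10 ^ 7)) ≤ 8515 / 10 ^ 7 * 280573 := by
          linarith [le_cotSum_right]
      _ ≤ 28 * 10 ^ 9 * (841237 / 10 ^ 9 * (8515 / 10 ^ 7 - 841238 / 10 ^ 9)) := by norm_num
      _ ≤ _ := by gcongr

lemma le_exp_neg_three_halves : (223 / 1000 : ℝ) ≤ exp (-(3 / 2)) := by
  have hsq : exp (3 / 2) ^ 2 = exp 1 ^ 3 := by
    rw [← exp_nat_mul, ← exp_nat_mul]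
    norm_num
  have hcube : exp 1 ^ 3 ≤ 2.7182818286 ^ 3 := by gcongr; exact exp_one_lt_d9.le
  have hexp : exp (3 / 2) ≤ 1000 / 223 :=
    le_of_sq_le_sq (hsq.trans_le (hcube.trans (by norm_num))) (by norm_num)
  rw [exp_neg, le_inv_comm₀ (by norm_num) (exp_pos _)]
  exact hexp.trans (by norm_num)

lemma mul_integral_window_le_peakIntegral {φ : ℝ → ℝ} (hφ : Continuous φ) (hφ0 : ∀ θ, 0 ≤ φ θ) :
    223 / 1000 * sinProd 5909 peakPoint *
      ∫ θ in peakPoint - 102 / 10 ^ 7..peakPoint + 102 / 10 ^ 7, φ θ ≤ peakIntegral 5909 φ := by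
  have hl := lt_peakPoint
  have hu := peakPoint_lt
  have hexp : 223 / 1000 ≤ exp (-(28 * 10 ^ 9 * (102 / 10 ^ 7 : ℝ) ^ 2 / 2)) :=
    le_exp_neg_three_halves.trans (exp_le_exp.2 (by norm_num))
  refine le_trans ?_ (mul_integral_le_peakIntegral (x := peakPoint) (r := 102 / 10 ^ 7)
    (K := 28 * 10 ^ 9) (by norm_num) (by norm_num)
    (fun θ hθ => ⟨by linarith [hθ.1], by linarith [hθ.2, lt_two_pi_div_5909]⟩)
    (fun θ hθ => neg_mul_sq_le_sub_peakPoint_mul_cotSum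
      ⟨by linarith [hθ.1], by linarith [hθ.2]⟩) hφ hφ0)
  refine mul_le_mul_of_nonneg_right ?_ (integral_nonneg (by linarith) fun θ _ => hφ0 θ)
  rw [mul_comm]
  exact mul_le_mul_of_nonneg_left hexp sinProd_peakPoint_pos.le

lemma mul_sinProd_le_peakIntegral_one :
    45 / 10 ^ 7 * sinProd 5909 peakPoint ≤ peakIntegral 5909 fun _ => 1 := by
  have h := mul_integral_window_le_peakIntegral (φ := fun _ => 1) continuous_const
    fun _ => zero_le_one
  rw [integral_const, smul_eq_mul] at h
  linarith [sinProd_peakPoint_pos]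

lemma peakIntegral_one_le_mul_sinProd :
    peakIntegral 5909 (fun _ => 1) ≤ 18 / 10 ^ 6 * sinProd 5909 peakPoint := by
  refine (peakIntegral_one_le (by norm_num) (fun _ => le_cscSqSum_5909) peakPoint_mem_Ioo
    cotSum_peakPoint).trans ?_
  rw [mul_comm]
  refine mul_le_mul_of_nonneg_right (sqrt_le_iff.2 ⟨by norm_num, ?_⟩) sinProd_peakPoint_pos.le
  rw [div_le_iff₀ (by norm_num)]
  norm_num
  linarith [pi_lt_d2]

lemma peakIntegral_one_pos : 0 < peakIntegral 5909 fun _ => 1 :=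
  (mul_pos (by norm_num) sinProd_peakPoint_pos).trans_le mul_sinProd_le_peakIntegral_one

lemma peakIntegral_sq_le :
    195 * 10 ^ 8 * peakIntegral 5909 (fun θ => (θ - peakPoint) ^ 2) ≤
      peakIntegral 5909 fun _ => 1 := by
  simpa using pow_mul_peakIntegral_pow_le (by norm_num) (fun _ => le_cscSqSum_5909)
    peakPoint_mem_Ioo cotSum_peakPoint 1

lemma peakIntegral_pow_four_le :
    (195 * 10 ^ 8) ^ 2 * peakIntegral 5909 (fun θ => (θ - peakPoint) ^ 4) ≤
      3 * peakIntegral 5909 fun _ => 1 := by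
  simpa [Nat.doubleFactorial] using pow_mul_peakIntegral_pow_le (by norm_num)
    (fun _ => le_cscSqSum_5909) peakPoint_mem_Ioo cotSum_peakPoint 2

lemma peakIntegral_pow_eight_le :
    (195 * 10 ^ 8) ^ 4 * peakIntegral 5909 (fun θ => (θ - peakPoint) ^ 8) ≤
      105 * peakIntegral 5909 fun _ => 1 := by
  simpa [Nat.doubleFactorial] using pow_mul_peakIntegral_pow_le (by norm_num)
    (fun _ => le_cscSqSum_5909) peakPoint_mem_Ioo cotSum_peakPoint 4

lemma mul_peakIntegral_one_le_peakIntegral_sin_half :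
    41 / 10 ^ 5 * peakIntegral 5909 (fun _ => 1) ≤ peakIntegral 5909 fun θ => sin (θ / 2) := by
  have hmono := peakIntegral_mono (n := 5909)
    (f := fun θ => 415 / 10 ^ 6 * 1 - 36000 * (θ - peakPoint) ^ 2) (g := fun θ => sin (θ / 2))
    (by fun_prop) (by fun_prop) fun θ hθ => by
      obtain ⟨hθ0, hθb⟩ := hθ
      have hsin := sin_gt_sub_cube (half_pos hθ0)
      have hcube : (θ / 2) ^ 2 * (θ / 2) ≤ (6 / 10 ^ 4) ^ 2 * (θ / 2) := by
        have hhalf : θ / 2 ≤ 6 / 10 ^ 4 := by linarith [two_pi_div_5909_lt]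
        gcongr
      nlinarith [sq_nonneg (θ - peakPoint + 7 / 10 ^ 6), lt_peakPoint]
  rw [peakIntegral_sub (by fun_prop) (by fun_prop), peakIntegral_const_mul,
    peakIntegral_const_mul] at hmono
  linarith [peakIntegral_sq_le, peakIntegral_one_pos]

lemma abs_sin_sub_self_le (y : ℝ) : |sin y - y| ≤ |y| ^ 3 / 6 := by
  have hnonneg : ∀ y : ℝ, 0 ≤ y → |sin y - y| ≤ y ^ 3 / 6 := by
    intro y hy
    rcases hy.eq_or_lt with rfl | hpos
    · simp
    · rw [abs_le]
      constructor <;> nlinarith [sin_gt_sub_cube hpos, sin_lt hpos, pow_pos hpos 3]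
  rcases le_total 0 y with h | h
  · simpa only [abs_of_nonneg h] using hnonneg y h
  · have hneg := hnonneg (-y) (by linarith)
    rwa [sin_neg, neg_sub_neg, abs_sub_comm, ← abs_of_nonpos h] at hneg

lemma abs_sin_sub_self_le_of_pos {ε : ℝ} (hε : 0 < ε) (y : ℝ) :
    |sin y - y| ≤ (ε * y ^ 2 + y ^ 4 / ε) / 12 := by
  have hy4 : y ^ 4 = |y| ^ 4 := by rw [← abs_pow, abs_of_nonneg (by positivity)]
  have hamgm : 2 * |y| ^ 3 ≤ ε * y ^ 2 + y ^ 4 / ε := by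
    have hsq : 0 ≤ (|y| * (ε - |y|)) ^ 2 / ε := by positivity
    have hexpand : (|y| * (ε - |y|)) ^ 2 / ε = ε * |y| ^ 2 - 2 * |y| ^ 3 + |y| ^ 4 / ε := by
      field_simp
      ring
    rw [hexpand] at hsq
    rw [hy4, ← sq_abs y]
    linarith
  linarith [abs_sin_sub_self_le y]

/-- The cubic Taylor error, majorized by even powers of `t` through `abs_sin_sub_self_le_of_pos`
with `ε = 9 / 200`, so that only even moments of the peak are needed. -/
lemma abs_sin_sub_self_le_even {e M t : ℝ} (he : |e| ≤ 7 / 10 ^ 4) (hM : M ∈ Icc 0 1868) :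
    |sin (e - M * t) - (e - M * t)| ≤ 38 / 10 ^ 10 + 26171 * t ^ 2 + 1804 * 10 ^ 11 * t ^ 4 := by
  have he2 : e ^ 2 ≤ (7 / 10 ^ 4) ^ 2 := sq_le_sq' (abs_le.1 he).1 (abs_le.1 he).2
  have hMt2 : (M * t) ^ 2 ≤ 1868 ^ 2 * t ^ 2 := by
    rw [mul_pow]
    gcongr
    exacts [hM.1, hM.2]
  have he4 : (e ^ 2) ^ 2 ≤ ((7 / 10 ^ 4) ^ 2) ^ 2 := by gcongr
  have hMt4 : ((M * t) ^ 2) ^ 2 ≤ (1868 ^ 2 * t ^ 2) ^ 2 := by gcongr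
  have hsq : (e - M * t) ^ 2 ≤ 2 * e ^ 2 + 2 * (M * t) ^ 2 := by
    linarith [sq_nonneg (e + M * t)]
  have hfourth : (e - M * t) ^ 4 ≤ 8 * (e ^ 2) ^ 2 + 8 * ((M * t) ^ 2) ^ 2 :=
    calc (e - M * t) ^ 4 = ((e - M * t) ^ 2) ^ 2 := by ring
      _ ≤ (2 * e ^ 2 + 2 * (M * t) ^ 2) ^ 2 := by gcongr
      _ ≤ _ := by linarith [sq_nonneg (e ^ 2 - (M * t) ^ 2)]
  refine (abs_sin_sub_self_le_of_pos (ε := 9 / 200) (by norm_num) _).trans ?_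
  linarith [sq_nonneg t, sq_nonneg (t ^ 2)]

lemma peakIntegral_even_le :
    peakIntegral 5909 (fun θ => 54 / 10 ^ 5 * (38 / 10 ^ 10 * 1 + 26171 * (θ - peakPoint) ^ 2 +
      1804 * 10 ^ 11 * (θ - peakPoint) ^ 4)) ≤ 16 / 10 ^ 10 * peakIntegral 5909 fun _ => 1 := by
  rw [peakIntegral_const_mul, peakIntegral_add (by fun_prop) (by fun_prop),
    peakIntegral_add (by fun_prop) (by fun_prop), peakIntegral_const_mul, peakIntegral_const_mul,
    peakIntegral_const_mul]
  linarith [peakIntegral_sq_le, peakIntegral_pow_four_le, peakIntegral_one_pos]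

lemma sin_half_mem_Ioo {θ : ℝ} (hθ : θ ∈ Ioo 0 (2 * π / (5909 : ℕ))) :
    sin (θ / 2) ∈ Ioo 0 (54 / 10 ^ 5) := by
  have hb := two_pi_div_5909_lt
  have hlt := sin_lt (half_pos hθ.1)
  exact ⟨sin_pos_of_pos_of_lt_pi (half_pos hθ.1) (by linarith [hθ.2, pi_gt_three]),
    by linarith [hθ.2]⟩

/-- `cos (M * θ) = sin (e - M * (θ - peakPoint))` with `e = π / 2 - M * peakPoint` small. -/
lemma abs_peakIntegral_sin_half_mul_cos_sub_le {M : ℝ} (hM : M ∈ Icc 0 1868)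
    (he : |π / 2 - M * peakPoint| ≤ 7 / 10 ^ 4) :
    |peakIntegral 5909 (fun θ => sin (θ / 2) * cos (M * θ)) -
      ((π / 2 - M * peakPoint) * peakIntegral 5909 (fun θ => sin (θ / 2)) -
        M * peakIntegral 5909 fun θ => sin (θ / 2) * (θ - peakPoint))| ≤
      16 / 10 ^ 10 * peakIntegral 5909 fun _ => 1 := by
  rw [← peakIntegral_const_mul, ← peakIntegral_const_mul,
    ← peakIntegral_sub (by fun_prop) (by fun_prop), ← peakIntegral_sub (by fun_prop) (by fun_prop)]
  refine (abs_peakIntegral_le _).trans (le_trans ?_ peakIntegral_even_le)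
  refine peakIntegral_mono (by fun_prop) (by fun_prop) fun θ hθ => ?_
  obtain ⟨hsin0, hsin⟩ := sin_half_mem_Ioo hθ
  have hcos : cos (M * θ) = sin (π / 2 - M * peakPoint - M * (θ - peakPoint)) := by
    rw [← cos_pi_div_two_sub]
    congr 1
    ring
  have herr := abs_sin_sub_self_le_even (t := θ - peakPoint) he hM
  calc |sin (θ / 2) * cos (M * θ) - ((π / 2 - M * peakPoint) * sin (θ / 2) -
          M * (sin (θ / 2) * (θ - peakPoint)))|
      = |sin (θ / 2) * (cos (M * θ) - (π / 2 - M * peakPoint - M * (θ - peakPoint)))| := by ring_nf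
    _ ≤ _ := by
        rw [abs_mul, abs_of_pos hsin0, hcos, mul_one]
        gcongr

lemma peakIntegral_sin_half_pos : 0 < peakIntegral 5909 fun θ => sin (θ / 2) :=
  (mul_pos (by norm_num) peakIntegral_one_pos).trans_le
    mul_peakIntegral_one_le_peakIntegral_sin_half

lemma le_peakIntegral_sin_half_mul_cos_1867 :
    1 / 10 ^ 8 * peakIntegral 5909 (fun _ => 1) ≤
      peakIntegral 5909 fun θ => sin (θ / 2) * cos (1867 * θ) := by
  have hl := lt_peakPoint
  have hu := peakPoint_lt
  have hπl := pi_gt_d6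
  have hπu := pi_lt_d6
  have hS := peakIntegral_sin_half_pos
  have happrox := (abs_le.1 (abs_peakIntegral_sin_half_mul_cos_sub_le (M := 1867)
    ⟨by norm_num, by norm_num⟩ (by rw [abs_le]; constructor <;> linarith))).1
  have hT := mul_peakIntegral_sin_half_mul_le (n := 5909) (by norm_num) peakPoint_mem_Ioo
    cotSum_peakPoint
  have hκ : 841237 / 10 ^ 9 * (26 * 10 ^ 9) ≤ peakPoint * cscSqSum 5909 peakPoint := by
    have hκ0 := le_cscSqSum_peakPoint
    gcongr
  have hT' : 1867 * peakIntegral 5909 (fun θ => sin (θ / 2) * (θ - peakPoint)) ≤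
      1708 / 10 ^ 7 * peakIntegral 5909 fun θ => sin (θ / 2) := by
    rcases le_total (peakIntegral 5909 fun θ => sin (θ / 2) * (θ - peakPoint)) 0 with h0 | h0
    · linarith
    · linarith [mul_le_mul_of_nonneg_right hκ h0]
  have he : 2046 / 10 ^ 7 * peakIntegral 5909 (fun θ => sin (θ / 2)) ≤
      (π / 2 - 1867 * peakPoint) * peakIntegral 5909 fun θ => sin (θ / 2) :=
    mul_le_mul_of_nonneg_right (by linarith) hS.le
  linarith [mul_peakIntegral_one_le_peakIntegral_sin_half, peakIntegral_one_pos]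

lemma peakIntegral_sin_half_mul_cos_1868_le :
    peakIntegral 5909 (fun θ => sin (θ / 2) * cos (1868 * θ)) ≤
      -(1 / 10 ^ 7 * peakIntegral 5909 fun _ => 1) := by
  have hl := lt_peakPoint
  have hu := peakPoint_lt
  have hπl := pi_gt_d6
  have hπu := pi_lt_d6
  have hS := peakIntegral_sin_half_pos
  have happrox := (abs_le.1 (abs_peakIntegral_sin_half_mul_cos_sub_le (M := 1868)
    ⟨by norm_num, le_rfl⟩ (by rw [abs_le]; constructor <;> linarith))).2
  have hT := neg_peakIntegral_sin_half_le (n := 5909) (by norm_num) peakPoint_mem_Ioo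
    cotSum_peakPoint
  have hκ : (106332 / 10 ^ 8 - 841238 / 10 ^ 9) * (26 * 10 ^ 9) ≤
      (2 * π / (5909 : ℕ) - peakPoint) * cscSqSum 5909 peakPoint := by
    have hκ0 := le_cscSqSum_peakPoint
    have hb := lt_two_pi_div_5909
    gcongr
    linarith
  have hT' : -(1868 * peakIntegral 5909 fun θ => sin (θ / 2) * (θ - peakPoint)) ≤
      3236 / 10 ^ 7 * peakIntegral 5909 fun θ => sin (θ / 2) := by
    rcases le_total 0 (peakIntegral 5909 fun θ => sin (θ / 2) * (θ - peakPoint)) with h0 | h0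
    · linarith
    · linarith [mul_le_mul_of_nonpos_right hκ h0]
  have he : (π / 2 - 1868 * peakPoint) * peakIntegral 5909 (fun θ => sin (θ / 2)) ≤
      -(6340 / 10 ^ 7) * peakIntegral 5909 fun θ => sin (θ / 2) :=
    mul_le_mul_of_nonneg_right (by linarith) hS.le
  linarith [mul_peakIntegral_one_le_peakIntegral_sin_half, peakIntegral_one_pos]

lemma le_peakIntegral_sin_half_mul_cos {M : ℝ} (hM : M ∈ Icc 0 1867) :
    1 / 10 ^ 8 * peakIntegral 5909 (fun _ => 1) ≤
      peakIntegral 5909 fun θ => sin (θ / 2) * cos (M * θ) := by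
  refine le_peakIntegral_sin_half_mul_cos_1867.trans
    (peakIntegral_mono (by fun_prop) (by fun_prop) fun θ hθ => ?_)
  obtain ⟨hM0, hM⟩ := hM
  have hθ0 := hθ.1
  refine mul_le_mul_of_nonneg_left ?_ (sin_half_mem_Ioo hθ).1.le
  refine cos_le_cos_of_nonneg_of_le_pi (by positivity) ?_ (by gcongr)
  linarith [hθ.2, two_pi_div_5909_lt, pi_gt_three]

/-- If `(M + 1868) * θ ≤ 2 * π`, then `cos (M * θ) ≤ cos (1868 * θ)`; otherwise `θ` is at least
`477 / 10 ^ 7` to the right of `peakPoint`. -/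
lemma cos_mul_le_cos_mul_add {M θ : ℝ} (hM : M ∈ Icc 1868 5200) (hθ : 0 ≤ θ) :
    cos (M * θ) ≤ cos (1868 * θ) + 2 * ((θ - peakPoint) / (477 / 10 ^ 7)) ^ 8 := by
  obtain ⟨hM1, hM2⟩ := hM
  have hpow : 0 ≤ ((θ - peakPoint) / (477 / 10 ^ 7)) ^ 8 := by positivity
  rcases le_total ((M + 1868) * θ) (2 * π) with hsmall | hlarge
  · have hdiff := cos_sub_cos (M * θ) (1868 * θ)
    rw [← add_mul, ← sub_mul] at hdiff
    have hplus : 0 ≤ sin ((M + 1868) * θ / 2) :=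
      sin_nonneg_of_nonneg_of_le_pi (by positivity) (by linarith)
    have hminus : 0 ≤ sin ((M - 1868) * θ / 2) :=
      sin_nonneg_of_nonneg_of_le_pi
        (div_nonneg (mul_nonneg (sub_nonneg.2 hM1) hθ) zero_le_two) (by linarith)
    linarith [mul_nonneg hplus hminus, hpow]
  · have hθM : (M + 1868) * θ ≤ 7068 * θ := by gcongr; linarith
    have hfar : 1 ≤ (θ - peakPoint) / (477 / 10 ^ 7) := by
      rw [le_div_iff₀ (by norm_num)]
      linarith [pi_gt_d6, peakPoint_lt]
    linarith [one_le_pow₀ (n := 8) hfar, cos_le_one (M * θ), neg_one_le_cos (1868 * θ)]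

lemma peakIntegral_sin_half_mul_cos_le {M : ℝ} (hM : M ∈ Icc 1868 5200) :
    peakIntegral 5909 (fun θ => sin (θ / 2) * cos (M * θ)) ≤
      -(5 / 10 ^ 8 * peakIntegral 5909 fun _ => 1) := by
  have hmono := peakIntegral_mono (n := 5909) (f := fun θ => sin (θ / 2) * cos (M * θ))
    (g := fun θ => sin (θ / 2) * cos (1868 * θ) +
      108 / 10 ^ 5 / (477 / 10 ^ 7) ^ 8 * (θ - peakPoint) ^ 8) (by fun_prop) (by fun_prop)
    fun θ hθ => by
      obtain ⟨hsin0, hsin⟩ := sin_half_mem_Ioo hθ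
      have hcos := mul_le_mul_of_nonneg_left (cos_mul_le_cos_mul_add hM hθ.1.le) hsin0.le
      calc _ ≤ _ := hcos
        _ ≤ sin (θ / 2) * cos (1868 * θ) +
            54 / 10 ^ 5 * (2 * ((θ - peakPoint) / (477 / 10 ^ 7)) ^ 8) := by
            rw [mul_add]
            gcongr
        _ = _ := by rw [div_pow]; ring
  rw [peakIntegral_add (by fun_prop) (by fun_prop), peakIntegral_const_mul] at hmono
  linarith [peakIntegral_sin_half_mul_cos_1868_le, peakIntegral_pow_eight_le, peakIntegral_one_pos]

/-! ### The frequency `1867.5` against high frequencies -/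

lemma integral_sin_mul_sub_add {m : ℝ} (hm : m ≠ 0) (x r : ℝ) :
    ∫ θ in x - r..x + r, sin (m * θ) = 2 * sin (m * x) * sin (m * r) / m := by
  rw [integral_comp_mul_left (fun θ => sin θ) hm, integral_sin, mul_sub, mul_add, cos_sub,
    cos_add, smul_eq_mul]
  field_simp
  ring

lemma abs_sin_le_mul {s : ℝ} (hs : 53 / 1000 ≤ s) : |sin s| ≤ s * (1 - 46 / 10 ^ 5) := by
  have hle_one : ∀ s : ℝ, 53 / 1000 ≤ s → s ≤ 1 → sin s ≤ s * (1 - 46 / 10 ^ 5) := by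
    intro s hs hs1
    have hs0 : |s| = s := abs_of_pos (by linarith)
    have hbound := (abs_le.1 (sin_bound (x := s) (by rwa [hs0]))).2
    rw [hs0] at hbound
    have hpoly : 46 / 10 ^ 5 ≤ s ^ 2 / 6 - s ^ 4 / 100 := by
      nlinarith [mul_nonneg (by nlinarith : 0 ≤ s ^ 2 - 28 / 10 ^ 4)
        (by nlinarith : 0 ≤ 1 - s ^ 2)]
    nlinarith
  rcases le_total s 2 with h2 | h2
  · rw [abs_of_nonneg (sin_nonneg_of_nonneg_of_le_pi (by linarith) (by linarith [pi_gt_three]))]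
    rcases le_total s 1 with h1 | h1
    · exact hle_one s hs h1
    · have hhalf := hle_one (s / 2) (by linarith) (by linarith)
      have hsin0 : 0 ≤ sin (s / 2) :=
        sin_nonneg_of_nonneg_of_le_pi (by linarith) (by linarith [pi_gt_three])
      calc sin s = 2 * sin (s / 2) * cos (s / 2) := by
            rw [← sin_two_mul, mul_div_cancel₀ s two_ne_zero]
        _ ≤ 2 * sin (s / 2) := mul_le_of_le_one_right (by positivity) (cos_le_one _)
        _ ≤ _ := by linarith
  · linarith [abs_sin_le_one s]

lemma mul_peakIntegral_sin_mul_le {m ε : ℝ} (hm : 5200.5 ≤ m) (hε : |ε| = 1) :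
    ε * peakIntegral 5909 (fun θ => sin (m * θ)) ≤
      peakIntegral 5909 (fun _ => 1) - 2 / 10 ^ 9 * sinProd 5909 peakPoint := by
  have hm0 : 0 < m := by linarith
  have hφ0 : ∀ θ, 0 ≤ 1 - ε * sin (m * θ) := fun θ => by
    have habs : |ε * sin (m * θ)| ≤ 1 := by
      rw [abs_mul, hε, one_mul]
      exact abs_sin_le_one _
    linarith [le_abs_self (ε * sin (m * θ))]
  have hwindow := mul_integral_window_le_peakIntegral (by fun_prop) hφ0
  rw [peakIntegral_sub (by fun_prop) (by fun_prop), peakIntegral_const_mul, integral_sub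
    (Continuous.intervalIntegrable (by fun_prop) _ _)
    (Continuous.intervalIntegrable (by fun_prop) _ _), integral_const_mul,
    integral_sin_mul_sub_add hm0.ne', integral_const, smul_eq_mul] at hwindow
  have hosc : ε * (2 * sin (m * peakPoint) * sin (m * (102 / 10 ^ 7)) / m) ≤
      2 * (102 / 10 ^ 7) * (1 - 46 / 10 ^ 5) := by
    refine (le_abs_self _).trans ?_
    rw [abs_mul, hε, one_mul, abs_div, abs_mul, abs_mul, abs_of_pos hm0, abs_two,
      div_le_iff₀ hm0]
    have hsin := mul_le_mul (abs_sin_le_one (m * peakPoint))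
      (abs_sin_le_mul (s := m * (102 / 10 ^ 7)) (by linarith)) (abs_nonneg _) zero_le_one
    linarith
  linarith [mul_le_mul_of_nonneg_left hosc sinProd_peakPoint_pos.le, sinProd_peakPoint_pos]

lemma abs_peakIntegral_sin_mul_le {m : ℝ} (hm : 5200.5 ≤ m) :
    |peakIntegral 5909 fun θ => sin (m * θ)| ≤
      peakIntegral 5909 (fun _ => 1) - 2 / 10 ^ 9 * sinProd 5909 peakPoint := by
  rw [abs_le']
  constructor
  · simpa using mul_peakIntegral_sin_mul_le (ε := 1) hm (by simp)
  · simpa using mul_peakIntegral_sin_mul_le (ε := -1) hm (by simp)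

lemma le_peakIntegral_sin_mul_1867 :
    peakIntegral 5909 (fun _ => 1) - 175 / 10 ^ 11 * sinProd 5909 peakPoint ≤
      peakIntegral 5909 fun θ => sin (1867.5 * θ) := by
  have hmono := peakIntegral_mono (n := 5909)
    (f := fun θ => (1 - 101 * (22 / 10 ^ 5) ^ 2 / 2) * 1 -
      1.01 * 1867.5 ^ 2 / 2 * (θ - peakPoint) ^ 2)
    (g := fun θ => sin (1867.5 * θ)) (by fun_prop) (by fun_prop) fun θ _ => by
      have hcos : sin (1867.5 * θ) =
          cos (1867.5 * peakPoint - π / 2 + 1867.5 * (θ - peakPoint)) := by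
        rw [← cos_sub_pi_div_two]
        congr 1
        ring
      have he : (1867.5 * peakPoint - π / 2) ^ 2 ≤ (22 / 10 ^ 5) ^ 2 := by
        refine sq_le_sq' ?_ ?_ <;> linarith [pi_gt_d6, pi_lt_d6, lt_peakPoint, peakPoint_lt]
      rw [hcos]
      refine le_trans ?_ one_sub_sq_div_two_le_cos
      generalize 1867.5 * peakPoint - π / 2 = e at he
      nlinarith [sq_nonneg (10 * e - 1867.5 * (θ - peakPoint) / 10)]
  rw [peakIntegral_sub (by fun_prop) (by fun_prop), peakIntegral_const_mul,
    peakIntegral_const_mul] at hmono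
  linarith [peakIntegral_sq_le, peakIntegral_one_le_mul_sinProd, peakIntegral_one_pos,
    sinProd_peakPoint_pos]

/-! ### Comparing the Fourier integrals -/

lemma exp_1080_mul_pi_le : exp 1080 * π ≤ 1 / 10 ^ 14 * exp 1130 := by
  have hexp : exp 1130 = exp 1 ^ 50 * exp 1080 := by
    rw [← exp_nat_mul, ← exp_add]
    norm_num
  have hpow : (2.7 : ℝ) ^ 50 ≤ exp 1 ^ 50 := by
    gcongr
    linarith [exp_one_gt_d9]
  rw [hexp, mul_comm (exp 1080), ← mul_assoc]
  refine mul_le_mul_of_nonneg_right ?_ (exp_pos _).le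
  linarith [pi_lt_four, (by norm_num : (4 * 10 ^ 14 : ℝ) ≤ 2.7 ^ 50)]

lemma exp_le_sinProd_peakPoint : exp 1130 ≤ sinProd 5909 peakPoint := by
  have hmem : 2 * π / 7360 ∈ Ioo 0 (2 * π / (5909 : ℕ)) :=
    ⟨by positivity, div_lt_div_of_pos_left (by positivity) (by norm_num) (by norm_num)⟩
  refine exp_le_sinProd.trans ((sinProd_le_mul_exp (fun θ => le_cscSqSum_5909) peakPoint_mem_Ioo
    cotSum_peakPoint hmem).trans (mul_le_of_le_one_right sinProd_peakPoint_pos.le ?_))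
  exact exp_le_one_iff.2 (by nlinarith [sq_nonneg (2 * π / 7360 - peakPoint)])

lemma abs_integral_sub_peakIntegral_le {φ : ℝ → ℝ} (hφ : Continuous φ) (hφ1 : ∀ θ, |φ θ| ≤ 1) :
    |(∫ θ in 0..π, sinProd 5909 θ * φ θ) - peakIntegral 5909 φ| ≤
      1 / 10 ^ 14 * sinProd 5909 peakPoint := by
  have hb : 2 * π / (5909 : ℕ) ≤ π := by linarith [two_pi_div_5909_lt, pi_gt_three]
  have htail : ∀ θ ∈ uIoc (2 * π / (5909 : ℕ)) π, ‖sinProd 5909 θ * φ θ‖ ≤ exp 1080 := by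
    intro θ hθ
    rw [uIoc_of_le hb] at hθ
    rw [norm_mul, norm_eq_abs, norm_eq_abs]
    calc |sinProd 5909 θ| * |φ θ| ≤ |sinProd 5909 θ| :=
          mul_le_of_le_one_right (abs_nonneg _) (hφ1 θ)
      _ ≤ exp (0.1752 * (5909 : ℕ) + 37.1) :=
          abs_sinProd_le_exp (by norm_num) (Ioc_subset_Icc_self hθ)
      _ ≤ exp 1080 := exp_le_exp.2 (by norm_num)
  rw [peakIntegral, integral_interval_sub_left (intervalIntegrable_sinProd_mul hφ _ _)
    (intervalIntegrable_sinProd_mul hφ _ _), ← norm_eq_abs]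
  calc ‖∫ θ in 2 * π / (5909 : ℕ)..π, sinProd 5909 θ * φ θ‖
      ≤ exp 1080 * |π - 2 * π / (5909 : ℕ)| := norm_integral_le_of_norm_le_const htail
    _ ≤ exp 1080 * π := by
        rw [abs_of_nonneg (sub_nonneg.2 hb)]
        gcongr
        exact sub_le_self _ (by positivity)
    _ ≤ 1 / 10 ^ 14 * exp 1130 := exp_1080_mul_pi_le
    _ ≤ _ := by
        gcongr
        exact exp_le_sinProd_peakPoint

/-- The sine integral of `sinProd n` over `[0, π]` at frequency `m`; for `n % 4 = 1` its values at
`m = n * (n + 1) / 4 - i` are the coefficients `π * a n i`. -/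
noncomputable def sineIntegral (n : ℕ) (m : ℝ) : ℝ := ∫ θ in 0..π, sinProd n θ * sin (m * θ)

lemma sineIntegral_neg (n : ℕ) (m : ℝ) : sineIntegral n (-m) = -sineIntegral n m := by
  simp only [sineIntegral, neg_mul, sin_neg, mul_neg, integral_neg]

lemma sineIntegral_add_half_sub (n : ℕ) (m : ℝ) :
    sineIntegral n (m + 1 / 2) - sineIntegral n (m - 1 / 2) =
      2 * ∫ θ in 0..π, sinProd n θ * (sin (θ / 2) * cos (m * θ)) := by
  rw [sineIntegral, sineIntegral, ← integral_const_mul,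
    ← integral_sub (intervalIntegrable_sinProd_mul (by fun_prop) _ _)
      (intervalIntegrable_sinProd_mul (by fun_prop) _ _)]
  congr 1
  ext θ
  have hsin := sin_sub_sin ((m + 1 / 2) * θ) ((m - 1 / 2) * θ)
  rw [← sub_mul, ← add_mul, add_sub_sub_cancel, add_add_sub_cancel, add_halves, ← two_mul,
    mul_assoc 2 m, mul_div_cancel_left₀ _ two_ne_zero, one_mul] at hsin
  rw [← mul_sub, hsin]
  ring

lemma abs_sin_half_mul_cos_le_one (m θ : ℝ) : |sin (θ / 2) * cos (m * θ)| ≤ 1 := by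
  rw [abs_mul]
  exact mul_le_one₀ (abs_sin_le_one _) (abs_nonneg _) (abs_cos_le_one _)

lemma sineIntegral_sub_half_lt_add_half {m : ℝ} (hm : m ∈ Icc 0 1867) :
    sineIntegral 5909 (m - 1 / 2) < sineIntegral 5909 (m + 1 / 2) := by
  have htail := (abs_le.1 (abs_integral_sub_peakIntegral_le (by fun_prop)
    (abs_sin_half_mul_cos_le_one m))).1
  linarith [sineIntegral_add_half_sub 5909 m, le_peakIntegral_sin_half_mul_cos hm,
    mul_sinProd_le_peakIntegral_one, sinProd_peakPoint_pos]

lemma sineIntegral_add_half_lt_sub_half {m : ℝ} (hm : m ∈ Icc 1868 5200) :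
    sineIntegral 5909 (m + 1 / 2) < sineIntegral 5909 (m - 1 / 2) := by
  have htail := (abs_le.1 (abs_integral_sub_peakIntegral_le (by fun_prop)
    (abs_sin_half_mul_cos_le_one m))).2
  linarith [sineIntegral_add_half_sub 5909 m, peakIntegral_sin_half_mul_cos_le hm,
    mul_sinProd_le_peakIntegral_one, sinProd_peakPoint_pos]

lemma abs_sineIntegral_lt_of_far {m : ℝ} (hm : 5200.5 ≤ m) :
    |sineIntegral 5909 m| < sineIntegral 5909 1867.5 := by
  have htail (m : ℝ) := abs_le.1 (abs_integral_sub_peakIntegral_le (φ := fun θ => sin (m * θ))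
    (by fun_prop) fun _ => abs_sin_le_one _)
  have hpeak := abs_le.1 (abs_peakIntegral_sin_mul_le hm)
  have htop := le_peakIntegral_sin_mul_1867
  have hpos := sinProd_peakPoint_pos
  rw [sineIntegral, sineIntegral, abs_lt]
  constructor <;> linarith [(htail m).1, (htail m).2, (htail 1867.5).1]

lemma strictMonoOn_sineIntegral :
    StrictMonoOn (fun j : ℕ => sineIntegral 5909 (j + 1 / 2)) (Iic 1867) := by
  refine strictMonoOn_of_lt_succ ordConnected_Iic fun j _ _ hj => ?_
  have hj' : (j + 1 : ℝ) ≤ 1867 := by exact_mod_cast hj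
  have h := sineIntegral_sub_half_lt_add_half ⟨by positivity, hj'⟩
  rw [add_sub_assoc, sub_half] at h
  simpa only [Nat.succ_eq_succ, Nat.succ_eq_add_one, Nat.cast_add_one] using h

lemma strictAntiOn_sineIntegral :
    StrictAntiOn (fun j : ℕ => sineIntegral 5909 (j + 1 / 2)) (Icc 1867 5200) := by
  refine strictAntiOn_of_succ_lt ordConnected_Icc fun j _ hj hj1 => ?_
  have hlow : (1868 : ℝ) ≤ j + 1 := by exact_mod_cast Nat.succ_le_succ hj.1
  have hupp : (j + 1 : ℝ) ≤ 5200 := by exact_mod_cast hj1.2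
  have h := sineIntegral_add_half_lt_sub_half ⟨hlow, hupp⟩
  rw [add_sub_assoc, sub_half] at h
  simpa only [Nat.succ_eq_succ, Nat.succ_eq_add_one, Nat.cast_add_one] using h

lemma sineIntegral_half_pos : 0 < sineIntegral 5909 (1 / 2) := by
  have h := sineIntegral_sub_half_lt_add_half (m := 0) ⟨le_rfl, by norm_num⟩
  rw [zero_sub, sineIntegral_neg, zero_add] at h
  linarith

lemma abs_sineIntegral_lt {j : ℕ} (hj : j ≠ 1867) :
    |sineIntegral 5909 (j + 1 / 2)| < sineIntegral 5909 1867.5 := by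
  have htop : (1867 : ℕ) + 1 / 2 = (1867.5 : ℝ) := by norm_num
  rcases hj.lt_or_gt with hlt | hgt
  · have hle :=
      strictMonoOn_sineIntegral.monotoneOn (mem_Iic.2 (Nat.zero_le _)) hlt.le (Nat.zero_le j)
    rw [Nat.cast_zero, zero_add] at hle
    rw [abs_of_pos (sineIntegral_half_pos.trans_le hle), ← htop]
    exact strictMonoOn_sineIntegral hlt.le self_mem_Iic hlt
  rcases le_or_gt 5200 j with hfar | hnear
  · refine abs_sineIntegral_lt_of_far ?_
    linarith [(Nat.ofNat_le_cast (α := ℝ)).2 hfar]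
  · have hmem : j ∈ Icc 1867 5200 := ⟨hgt.le, hnear.le⟩
    have hupp := strictAntiOn_sineIntegral (by simp) hmem hgt
    have hlow := strictAntiOn_sineIntegral hmem (by simp) hnear
    have hend := abs_lt.1 (abs_sineIntegral_lt_of_far (m := (5200 : ℕ) + 1 / 2) (by norm_num))
    simp only [htop] at hupp
    exact abs_lt.2 ⟨hend.1.trans hlow, hupp⟩

/-! ### The largest coefficient -/

lemma pi_mul_natAbs_a {i j : ℕ} (h : i + j = 8730547 ∨ i = 8730548 + j) :
    π * (a 5909 i).natAbs = |sineIntegral 5909 (j + 1 / 2)| := by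
  have hcoeff : π * (a 5909 i : ℝ) = sineIntegral 5909 ((5909 : ℕ) * ((5909 : ℕ) + 1) / 4 - i) :=
    pi_mul_a_eq_integral (by norm_num) i
  rw [Nat.cast_natAbs, Int.cast_abs, ← abs_of_pos pi_pos, ← abs_mul, hcoeff]
  rcases h with h | h
  · have hi : (i : ℝ) = 8730547 - j := eq_sub_of_add_eq (by exact_mod_cast h)
    congr 2
    rw [hi]
    norm_num
    ring
  · rw [← abs_neg, ← sineIntegral_neg]
    congr 2
    rw [h]
    norm_num
    ring

lemma natAbs_a_lt {i j : ℕ} (h : i + j = 8730547 ∨ i = 8730548 + j) (hj : j ≠ 1867) :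
    (a 5909 i).natAbs < (a 5909 8728680).natAbs := by
  have htop := pi_mul_natAbs_a (i := 8728680) (j := 1867) (by norm_num)
  have hlt : π * (a 5909 i).natAbs < π * (a 5909 8728680).natAbs := by
    rw [pi_mul_natAbs_a h, htop]
    refine (abs_sineIntegral_lt hj).trans_le (le_of_eq_of_le ?_ (le_abs_self _))
    norm_num
  exact_mod_cast lt_of_mul_lt_mul_left hlt pi_pos.le

lemma natAbs_a_le (i : ℕ) : (a 5909 i).natAbs ≤ (a 5909 8728680).natAbs := by
  obtain ⟨j, h⟩ : ∃ j, i + j = 8730547 ∨ i = 8730548 + j := by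
    rcases le_or_gt i 8730547 with hi | hi
    · exact ⟨8730547 - i, by omega⟩
    · exact ⟨i - 8730548, by omega⟩
  rcases eq_or_ne j 1867 with rfl | hj
  · have heq : π * (a 5909 i).natAbs = π * (a 5909 8728680).natAbs :=
      (pi_mul_natAbs_a h).trans (pi_mul_natAbs_a (by norm_num)).symm
    exact_mod_cast (mul_left_cancel₀ pi_ne_zero heq).le
  · exact (natAbs_a_lt h hj).le

lemma L_eq_of_forall_natAbs_lt {n i : ℕ} (hi : i ≤ n * (n + 1) / 2)
    (hlt : ∀ k < i, (a n k).natAbs < (a n i).natAbs) (hle : ∀ k, (a n k).natAbs ≤ (a n i).natAbs) :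
    L n = i := by
  have hM : (a n i).natAbs = M n :=
    le_antisymm (Finset.le_sup (f := fun k => (a n k).natAbs) (Finset.mem_range_succ_iff.2 hi))
      (Finset.sup_le fun k _ => hle k)
  refine le_antisymm (Nat.sInf_le hM) (le_csInf ⟨i, hM⟩ fun k hk => ?_)
  by_contra! hki
  exact (hlt k hki).ne (hk.trans hM.symm)

end SineProduct

/-- `L(5909) = (5909·5910 - 2·3735)/4 = 8728680`. -/
theorem stmt_16 : L 5909 = (5909 * 5910 - 2 * 3735) / 4 ∧ L 5909 = 8728680 := by
  have hL : L 5909 = 8728680 := SineProduct.L_eq_of_forall_natAbs_lt (by norm_num)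
    (fun _ hk => SineProduct.natAbs_a_lt (.inl (Nat.add_sub_of_le (by omega))) (by omega))
    SineProduct.natAbs_a_le
  exact ⟨hL, hL⟩
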